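/- Mean-value property, sphere version: assume m > 4. Let a ∈ ℝ^m, r > 0, and let f ∈ C²(B(a,r)×𝔹^m, ℋ_k) extend continuously to (closed ball B̄(a,r)) × (closed unit ball), with 𝒟_k f = 0 in B(a,r) × 𝔹^m. Then for every ν ∈ 𝔹^m, f(a,ν) = (c_{m,k}/2) ∫_{𝕊^{m-1}} f(a + rζ, ζνζ) dS(ζ), where for |ζ| = 1 one has ζνζ = R_ζ(ν) = ν − 2⟨ζ,ν⟩ζ, and c_{m,k} = 2(m+2k−2)/((m−2)ω_m). -/

import Mathlib

noncomputable section

open MeasureTheory Metric Filter Topology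
open scoped RealInnerProductSpace

/-- `ℝ^m` as a Euclidean space. -/
abbrev Evec (m : ℕ) : Type := EuclideanSpace ℝ (Fin m)

/-- Partial derivative in the `i`-th coordinate direction. -/
def pdv {m : ℕ} (i : Fin m) (f : Evec m → ℝ) (x : Evec m) : ℝ :=
  fderiv ℝ f x (EuclideanSpace.single i 1)

/-- Euclidean Laplacian on `ℝ^m`. -/
def lapl {m : ℕ} (f : Evec m → ℝ) (x : Evec m) : ℝ :=
  ∑ i : Fin m, pdv i (pdv i f) x

/-- `p` is a real-valued polynomial function on `ℝ^m`, homogeneous of degree `k` and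
harmonic; i.e. `p ∈ ℋ_k`. -/
def IsHk (m k : ℕ) (p : Evec m → ℝ) : Prop :=
  (∃ P : MvPolynomial (Fin m) ℝ, ∀ x : Evec m, p x = MvPolynomial.eval (fun i => x i) P) ∧
  (∀ (c : ℝ) (x : Evec m), p (c • x) = c ^ k * p x) ∧
  (∀ x : Evec m, lapl p x = 0)

/-- The surface measure `dS` on the unit sphere `𝕊^{m-1}`, as a measure on `ℝ^m`. -/
def sphereM (m : ℕ) : Measure (Evec m) :=
  Measure.map Subtype.val ((volume : Measure (Evec m)).toSphere)

/-- `ω_m`, the surface area of the unit sphere `𝕊^{m-1}`. -/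
def omegaS (m : ℕ) : ℝ := (sphereM m Set.univ).toReal

/-- The constant `c_{m,k} = 2(m+2k-2)/((m-2)ω_m)`. -/
def cmk (m k : ℕ) : ℝ := 2 * ((m : ℝ) + 2 * k - 2) / (((m : ℝ) - 2) * omegaS m)

/-- The reflection `R_a(u) = u - 2⟨a,u⟩a/|a|²` (in Clifford notation `a u a/|a|²`). -/
def reflv {m : ℕ} (a u : Evec m) : Evec m :=
  u - (2 * ⟪a, u⟫ / ‖a‖ ^ 2) • a

/-- `dim ℋ_k`. -/
def hdim (m k : ℕ) : ℕ :=
  Nat.choose (m + k - 1) (m - 1) - Nat.choose (m + k - 3) (m - 1)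

/-- `Z` is the reproducing kernel `Z_k` of `ℋ_k` on the unit sphere: a symmetric,
rotation invariant kernel, bounded by `dim ℋ_k` on the unit ball, belonging to `ℋ_k`
in the first variable and reproducing elements of `ℋ_k` from their spherical values. -/
def IsZk (m k : ℕ) (Z : Evec m → Evec m → ℝ) : Prop :=
  (∀ v : Evec m, IsHk m k (fun u => Z u v)) ∧
  (∀ p : Evec m → ℝ, IsHk m k p → ∀ v : Evec m, (∫ u, Z u v * p u ∂(sphereM m)) = p v) ∧
  (∀ u v : Evec m, Z u v = Z v u) ∧
  (∀ u v : Evec m, ‖u‖ ≤ 1 → ‖v‖ ≤ 1 → |Z u v| ≤ (hdim m k : ℝ)) ∧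
  (∀ (A : Evec m ≃ₗᵢ[ℝ] Evec m) (u v : Evec m), Z (A u) (A v) = Z u v)

/-- The point `(x', y) ∈ ℝ^{d+1}` with first `d` coordinates `x'` and last coordinate `y`. -/
def upP (d : ℕ) (x' : Evec d) (y : ℝ) : Evec (d + 1) :=
  (EuclideanSpace.equiv (Fin (d + 1)) ℝ).symm
    (Fin.snoc (⇑(EuclideanSpace.equiv (Fin d) ℝ) x') y)

/-- The first `d` coordinates of a point of `ℝ^{d+1}`. -/
def downP (d : ℕ) (x : Evec (d + 1)) : Evec d :=
  (EuclideanSpace.equiv (Fin d) ℝ).symm (fun i => x (Fin.castSucc i))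

/-- The last coordinate of a point of `ℝ^{d+1}`. -/
def lastP (d : ℕ) (x : Evec (d + 1)) : ℝ := x (Fin.last d)

/-- The Poisson kernel `P_H` for bosonic Laplacians in the upper half-space `ℝ^{d+1}_+`,
`P_H(x,t,u,v) = c_{m,k} (y/|x-t|^m) Z_k(R_{x-t}(u), v)` with `m = d+1`, `x = (x',y)`,
`t = (t',0)`. -/
def PH (d k : ℕ) (Z : Evec (d + 1) → Evec (d + 1) → ℝ) (x' : Evec d) (y : ℝ)
    (t' : Evec d) (u v : Evec (d + 1)) : ℝ :=
  cmk (d + 1) k * (y / ‖upP d x' y - upP d t' 0‖ ^ (d + 1)) *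
    Z (reflv (upP d x' y - upP d t' 0) u) v

/-- The Poisson integral `P_H[f]` in the upper half-space. -/
def PHint (d k : ℕ) (Z : Evec (d + 1) → Evec (d + 1) → ℝ)
    (f : Evec d → Evec (d + 1) → ℝ) (x' : Evec d) (y : ℝ) (v : Evec (d + 1)) : ℝ :=
  ∫ t' : Evec d, (∫ u, PH d k Z x' y t' u v * f t' u ∂(sphereM (d + 1)))

/-- The Poisson kernel `P_B` for bosonic Laplacians in the unit ball. -/
def PB (m k : ℕ) (Z : Evec m → Evec m → ℝ) (x ζ ω ν : Evec m) : ℝ :=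
  (cmk m k / 2) * ((1 - ‖x‖ ^ 2) / ‖x - ζ‖ ^ m) * Z (reflv (x - ζ) ω) ν

/-- The Poisson integral `P_B[h]` in the unit ball. -/
def PBint (m k : ℕ) (Z : Evec m → Evec m → ℝ) (h : Evec m → Evec m → ℝ)
    (x ν : Evec m) : ℝ :=
  ∫ ζ, (∫ ω, PB m k Z x ζ ω ν * h ζ ω ∂(sphereM m)) ∂(sphereM m)

/-- Partial derivative in the first (`x`) variable. -/
def pd1 {m : ℕ} (i : Fin m) (f : Evec m → Evec m → ℝ) : Evec m → Evec m → ℝ :=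
  fun x u => fderiv ℝ (fun x₁ => f x₁ u) x (EuclideanSpace.single i 1)

/-- Partial derivative in the second (`u`) variable. -/
def pd2 {m : ℕ} (i : Fin m) (f : Evec m → Evec m → ℝ) : Evec m → Evec m → ℝ :=
  fun x u => fderiv ℝ (fun u₁ => f x u₁) u (EuclideanSpace.single i 1)

/-- The bosonic Laplacian `𝒟_k`. -/
def Dk (m k : ℕ) (f : Evec m → Evec m → ℝ) : Evec m → Evec m → ℝ := fun x u =>
  (∑ i : Fin m, pd1 i (pd1 i f) x u)
    - (4 / ((m : ℝ) + 2 * k - 2)) *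
        ∑ i : Fin m, ∑ j : Fin m, u i * pd1 i (pd2 j (pd1 j f)) x u
    + (4 * ‖u‖ ^ 2 / (((m : ℝ) + 2 * k - 2) * ((m : ℝ) + 2 * k - 4))) *
        ∑ i : Fin m, ∑ j : Fin m, pd2 i (pd1 i (pd2 j (pd1 j f))) x u

/-- `f ∈ C²(Ω×𝔹^m, ℋ_k)`: twice continuously differentiable on `Ω × 𝔹^m` and, for each
fixed `x ∈ Ω`, coinciding in the second variable with an element of `ℋ_k`. -/
def C2Hk (m k : ℕ) (Ω : Set (Evec m)) (f : Evec m → Evec m → ℝ) : Prop :=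
  ContDiffOn ℝ 2 (fun q : Evec m × Evec m => f q.1 q.2) (Ω ×ˢ ball (0 : Evec m) 1) ∧
  ∀ x ∈ Ω, ∃ q, IsHk m k q ∧ ∀ u ∈ closedBall (0 : Evec m) 1, f x u = q u

/-- The `L^p` norm `(∫_{ℝ^{m-1}} ∫_{𝕊^{m-1}} |f(x',u)|^p dS(u) dx')^{1/p}` (`m = d+1`),
valued in `ℝ≥0∞`. -/
def lpH (d : ℕ) (p : ℝ) (f : Evec d → Evec (d + 1) → ℝ) : ENNReal :=
  (∫⁻ x' : Evec d, ∫⁻ u, ENNReal.ofReal (|f x' u| ^ p) ∂(sphereM (d + 1))) ^ (1 / p)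

/-- `f ∈ L^p(ℝ^{m-1}×𝔹^m, ℋ_k)` (`m = d+1`). -/
def MemLpH (d k : ℕ) (p : ℝ) (f : Evec d → Evec (d + 1) → ℝ) : Prop :=
  Measurable (fun q : Evec d × Evec (d + 1) => f q.1 q.2) ∧
  (∀ x' : Evec d, ∃ q, IsHk (d + 1) k q ∧
    ∀ u ∈ closedBall (0 : Evec (d + 1)) 1, f x' u = q u) ∧
  lpH d p f < ⊤

/-- The `L^p` norm `(∫_{𝕊^{m-1}} ∫_{𝕊^{m-1}} |h(ζ,ω)|^p dS(ω) dS(ζ))^{1/p}`,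
valued in `ℝ≥0∞`. -/
def lpS (m : ℕ) (p : ℝ) (h : Evec m → Evec m → ℝ) : ENNReal :=
  (∫⁻ ζ, ∫⁻ ω, ENNReal.ofReal (|h ζ ω| ^ p) ∂(sphereM m) ∂(sphereM m)) ^ (1 / p)

/-- `h ∈ L^p(𝕊^{m-1}×𝔹^m, ℋ_k)`. -/
def MemLpS (m k : ℕ) (p : ℝ) (h : Evec m → Evec m → ℝ) : Prop :=
  Measurable (fun q : Evec m × Evec m => h q.1 q.2) ∧
  (∀ ζ : Evec m, ‖ζ‖ = 1 → ∃ q, IsHk m k q ∧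
    ∀ ω ∈ closedBall (0 : Evec m) 1, h ζ ω = q ω) ∧
  lpS m p h < ⊤

/-- Iterated partial derivative `D_x^α` in the first variable, for a multi-index `α ∈ ℕ^m`. -/
def Dx {m : ℕ} (α : Fin m → ℕ) (f : Evec m → Evec m → ℝ) : Evec m → Evec m → ℝ :=
  (List.finRange m).foldr (fun i g => (pd1 i)^[α i] g) f

/-- Iterated partial derivative `D_ν^β` in the second variable, for a multi-index `β ∈ ℕ^m`. -/
def Dv {m : ℕ} (β : Fin m → ℕ) (f : Evec m → Evec m → ℝ) : Evec m → Evec m → ℝ :=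
  (List.finRange m).foldr (fun i g => (pd2 i)^[β i] g) f

/-!
Approximating the coefficients of a separated expansion `f(x, u) = ∑ b, φ_b(x) q_b(u)` with
`q_b ∈ ℋ_k` by mollification preserves `𝒟_k f = 0` on smaller balls, so `f` may be taken smooth
with `a = 0`. The substitution `u ↦ |x|²u - 2⟨x, u⟩x` turns `𝒟_k` into the same operator written
in Kelvin-conjugated derivatives `K_i`, and the commutation relations of that operator force
`(∑ K_i²)^(k+1)` to annihilate the substituted function. On spherical means `∑ K_i²` acts through
Euler operators; solving the resulting Euler equations one factor at a time shows that
`∫ f(tζ, ζuζ) dS(ζ)` does not depend on `t`. At `t = 0` the reflection `ζuζ` is still present; to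
compare `∫ f(0, ζuζ) dS(ζ)` with `f(0, u)`, shear by `u ↦ u - ⟨x, u⟩x`, which is the identity at
`x = 0` and the reflection in `x` on `|x| = √2`, and integrate a first-order equation in `|x|`.
-/

namespace BosonicMeanValue

section Algebra

/-- The hypotheses are the commutation relations of `D = ⟨∂ₓ, ∂ᵤ⟩`, `N = ⟨u, ∂ₓ⟩`, `s = |u|²` and
`L = Δₓ`; they give `D B(P) = B(P - 2) D` for `B(P) = P(P - 2)L - 4(P - 2)ND + 4sD²`. -/
theorem pow_apply_mem_of_bosonic {𝕜 V : Type*} [Field 𝕜] [AddCommGroup V] [Module 𝕜 V]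
    {D N s L : Module.End 𝕜 V} (hDN : D * N = N * D + L) (hDs : D * s = s * D + 2 * N)
    (hLD : Commute L D) (hLN : Commute L N) (hLs : Commute L s) {W : Submodule 𝕜 V}
    (hWD : ∀ v ∈ W, D v ∈ W) (hWN : ∀ v ∈ W, N v ∈ W) (hWs : ∀ v ∈ W, s v ∈ W)
    (hWL : ∀ v ∈ W, L v ∈ W) (n : ℕ) : ∀ (P : 𝕜) (v : V),
      (∀ j < n, (P - 2 * j) * (P - 2 - 2 * j) ≠ 0) → (D ^ n) v ∈ W →
      (P * (P - 2)) • L v - (4 * (P - 2)) • N (D v) + (4 : 𝕜) • s (D (D v)) ∈ W →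
      (L ^ n) v ∈ W := by
  induction n with
  | zero => intro P v _ hv _; simpa using hv
  | succ n ih =>
    intro P v hP hv hB
    have hWLn (w : V) (hw : w ∈ W) : (L ^ n) w ∈ W :=
      Module.End.pow_apply_mem_of_forall_mem n hWL w hw
    have hDv : (L ^ n) (D v) ∈ W := by
      refine ih (P - 2) (D v) (fun j hj => ?_) (by rwa [pow_succ, Module.End.mul_apply] at hv) ?_
      · have := hP (j + 1) (by omega)
        push_cast at this
        convert this using 1
        ring
      · have hDN' (w : V) : D (N w) = N (D w) + L w := LinearMap.congr_fun hDN w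
        have hDs' (w : V) : D (s w) = s (D w) + (2 : 𝕜) • N w := by
          simpa [two_mul, two_smul] using LinearMap.congr_fun hDs w
        have hLD' (w : V) : D (L w) = L (D w) := (LinearMap.congr_fun hLD w).symm
        have := hWD _ hB
        simp only [map_add, map_sub, map_smul, hDN', hDs', hLD'] at this
        convert this using 1
        module
    have comm {T : Module.End 𝕜 V} (hT : Commute L T) (w : V) : (L ^ n) (T w) = T ((L ^ n) w) :=
      LinearMap.congr_fun (hT.pow_left n) w
    have hLB := hWLn _ hB
    simp only [map_add, map_sub, map_smul, comm hLN, comm hLs, comm hLD] at hLB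
    have hL : (P * (P - 2)) • (L ^ n) (L v) ∈ W := by
      have hN := W.smul_mem (4 * (P - 2)) (hWN _ hDv)
      have hs := W.smul_mem (4 : 𝕜) (hWs _ (hWD _ hDv))
      rw [comm hLD] at hN hs
      convert W.sub_mem (W.add_mem hLB hN) hs using 1
      module
    have h0 := hP 0 (by omega)
    simp only [Nat.cast_zero, mul_zero, sub_zero] at h0
    rw [pow_succ, Module.End.mul_apply]
    exact (W.smul_mem_iff h0).mp hL

section CommRing

variable {S : Type*} [CommRing S] [Algebra ℝ S]

lemma sum_smul_derivation_apply {ι : Type*} [Fintype ι] (c : ι → S) (δ : ι → Derivation ℝ S S)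
    (f : S) : (∑ i, c i • δ i) f = ∑ i, c i * δ i f := by
  rw [← Derivation.coeFnAddMonoidHom_apply, map_sum, Finset.sum_apply]
  rfl

lemma derivation_two (δ : Derivation ℝ S S) : δ 2 = 0 := by
  simpa using δ.map_natCast 2

lemma moduleEnd_intCast_mul (L : Module.End ℝ S) (n : ℤ) (f : S) : L (n * f) = n * L f := by
  rw [← zsmul_eq_mul, map_zsmul, zsmul_eq_mul]

end CommRing

/-- An algebra of functions of two vector variables `x` and `u`, given by its coordinate functions
and its partial derivatives. -/
structure BivariateFrame (m : ℕ) (S : Type*) [CommRing S] [Algebra ℝ S] where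
  /-- `∂/∂xᵢ` -/
  d : Fin m → Derivation ℝ S S
  /-- `∂/∂uᵢ` -/
  e : Fin m → Derivation ℝ S S
  x : Fin m → S
  u : Fin m → S
  d_x : ∀ i j, d i (x j) = if i = j then 1 else 0
  d_u : ∀ i j, d i (u j) = 0
  e_x : ∀ i j, e i (x j) = 0
  e_u : ∀ i j, e i (u j) = if i = j then 1 else 0
  d_d : ∀ i j f, d i (d j f) = d j (d i f)
  e_e : ∀ i j f, e i (e j f) = e j (e i f)
  e_d : ∀ i j f, e i (d j f) = d j (e i f)

namespace BivariateFrame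

variable {m : ℕ} {S : Type*} [CommRing S] [Algebra ℝ S] (F : BivariateFrame m S)

/-- `|x|²` -/
def rho : S := ∑ i, F.x i * F.x i

/-- `⟨x, u⟩` -/
def ell : S := ∑ i, F.x i * F.u i

/-- `|u|²` -/
def sigma : S := ∑ i, F.u i * F.u i

/-- The Euler operator `⟨x, ∂ₓ⟩`. -/
def eulerX : Derivation ℝ S S := ∑ i, F.x i • F.d i

/-- The Euler operator `⟨u, ∂ᵤ⟩`. -/
def eulerU : Derivation ℝ S S := ∑ i, F.u i • F.e i

/-- `⟨x, ∂ᵤ⟩` -/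
def xe : Derivation ℝ S S := ∑ i, F.x i • F.e i

/-- `⟨u, ∂ₓ⟩` -/
def ud : Derivation ℝ S S := ∑ i, F.u i • F.d i

/-- The mixed divergence `⟨∂ᵤ, ∂ₓ⟩`. -/
def ed : Module.End ℝ S := ∑ i, (F.e i : S →ₗ[ℝ] S) * (F.d i : S →ₗ[ℝ] S)

/-- The Laplacian in `x`. -/
def lapX : Module.End ℝ S := ∑ i, (F.d i : S →ₗ[ℝ] S) * (F.d i : S →ₗ[ℝ] S)

/-- The Laplacian in `u`. -/
def lapU : Module.End ℝ S := ∑ i, (F.e i : S →ₗ[ℝ] S) * (F.e i : S →ₗ[ℝ] S)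

lemma eulerX_apply (f : S) : F.eulerX f = ∑ i, F.x i * F.d i f := sum_smul_derivation_apply ..
lemma eulerU_apply (f : S) : F.eulerU f = ∑ i, F.u i * F.e i f := sum_smul_derivation_apply ..
lemma xe_apply (f : S) : F.xe f = ∑ i, F.x i * F.e i f := sum_smul_derivation_apply ..
lemma ud_apply (f : S) : F.ud f = ∑ i, F.u i * F.d i f := sum_smul_derivation_apply ..

lemma eulerX_x (i : Fin m) : F.eulerX (F.x i) = F.x i := by simp [eulerX_apply, F.d_x]
lemma eulerX_u (i : Fin m) : F.eulerX (F.u i) = 0 := by simp [eulerX_apply, F.d_u]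
lemma eulerU_x (i : Fin m) : F.eulerU (F.x i) = 0 := by simp [eulerU_apply, F.e_x]
lemma eulerU_u (i : Fin m) : F.eulerU (F.u i) = F.u i := by simp [eulerU_apply, F.e_u]
lemma xe_x (i : Fin m) : F.xe (F.x i) = 0 := by simp [xe_apply, F.e_x]
lemma xe_u (i : Fin m) : F.xe (F.u i) = F.x i := by simp [xe_apply, F.e_u]
lemma ud_x (i : Fin m) : F.ud (F.x i) = F.u i := by simp [ud_apply, F.d_x]

lemma d_rho (i : Fin m) : F.d i F.rho = 2 * F.x i := by
  simp [rho, F.d_x, Finset.sum_add_distrib, two_mul]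

lemma d_ell (i : Fin m) : F.d i F.ell = F.u i := by simp [ell, F.d_x, F.d_u]

lemma e_rho (i : Fin m) : F.e i F.rho = 0 := by simp [rho, F.e_x]

lemma e_ell (i : Fin m) : F.e i F.ell = F.x i := by simp [ell, F.e_x, F.e_u]

lemma eulerX_rho : F.eulerX F.rho = 2 * F.rho := by
  simp [rho, eulerX_x, Finset.sum_add_distrib, two_mul]

lemma eulerX_ell : F.eulerX F.ell = F.ell := by simp [ell, eulerX_x, eulerX_u, mul_comm]

lemma eulerU_rho : F.eulerU F.rho = 0 := by simp [eulerU_apply, e_rho]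

lemma eulerU_ell : F.eulerU F.ell = F.ell := by simp [ell, eulerU_x, eulerU_u]

lemma xe_rho : F.xe F.rho = 0 := by simp [xe_apply, e_rho]

lemma xe_ell : F.xe F.ell = F.rho := by simp [xe_apply, e_ell, rho]

lemma ud_rho : F.ud F.rho = 2 * F.ell := by
  simp [rho, ell, ud_x, two_mul, Finset.sum_add_distrib]

lemma eulerX_d (i : Fin m) (f : S) : F.eulerX (F.d i f) = F.d i (F.eulerX f) - F.d i f := by
  simp [eulerX_apply, F.d_x, Finset.sum_add_distrib, F.d_d i]

lemma eulerX_e (i : Fin m) (f : S) : F.eulerX (F.e i f) = F.e i (F.eulerX f) := by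
  simp [eulerX_apply, F.e_x, F.e_d]

lemma eulerU_d (i : Fin m) (f : S) : F.eulerU (F.d i f) = F.d i (F.eulerU f) := by
  simp [eulerU_apply, F.d_u, F.e_d]

lemma eulerU_e (i : Fin m) (f : S) : F.eulerU (F.e i f) = F.e i (F.eulerU f) - F.e i f := by
  simp [eulerU_apply, F.e_u, Finset.sum_add_distrib, F.e_e i]

lemma xe_d (i : Fin m) (f : S) : F.xe (F.d i f) = F.d i (F.xe f) - F.e i f := by
  simp [xe_apply, F.d_x, Finset.sum_add_distrib, F.e_d]

lemma xe_e (i : Fin m) (f : S) : F.xe (F.e i f) = F.e i (F.xe f) := by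
  simp [xe_apply, F.e_x, F.e_e i]

lemma eulerX_xe (f : S) : F.eulerX (F.xe f) = F.xe (F.eulerX f) + F.xe f := by
  simp [xe_apply, eulerX_x, eulerX_e, Finset.sum_add_distrib, mul_comm]

lemma eulerU_eulerX (f : S) : F.eulerU (F.eulerX f) = F.eulerX (F.eulerU f) := by
  simp [eulerX_apply, eulerU_x, eulerU_d]

lemma eulerU_xe (f : S) : F.eulerU (F.xe f) = F.xe (F.eulerU f) - F.xe f := by
  simp [xe_apply, eulerU_x, eulerU_e, mul_sub]

lemma rho_def : F.rho = ∑ i, F.x i * F.x i := rfl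
lemma ell_def : F.ell = ∑ i, F.x i * F.u i := rfl
lemma sigma_def : F.sigma = ∑ i, F.u i * F.u i := rfl
lemma ed_apply (f : S) : F.ed f = ∑ i, F.e i (F.d i f) := by simp [ed]
lemma lapX_apply (f : S) : F.lapX f = ∑ i, F.d i (F.d i f) := by simp [lapX]
lemma lapU_apply (f : S) : F.lapU f = ∑ i, F.e i (F.e i f) := by simp [lapU]

lemma lapU_xe (f : S) : F.lapU (F.xe f) = F.xe (F.lapU f) := by
  simp [lapU_apply, ← xe_e]

lemma lapU_ed (f : S) : F.lapU (F.ed f) = F.ed (F.lapU f) := by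
  simp only [lapU_apply, ed_apply, map_sum, ← F.e_d]
  exact Finset.sum_comm.trans (by simp only [F.e_e])

lemma lapU_rho_mul (f : S) : F.lapU (F.rho * f) = F.rho * F.lapU f := by
  simp [lapU_apply, e_rho, Finset.mul_sum]

lemma ed_rho_mul (f : S) : F.ed (F.rho * f) = F.rho * F.ed f + 2 * F.xe f := by
  simp [ed_apply, xe_apply, d_rho, e_rho, F.e_x, derivation_two, Finset.mul_sum,
    Finset.sum_add_distrib, mul_assoc, add_comm]

lemma ed_xe (f : S) : F.ed (F.xe f) = F.xe (F.ed f) + F.lapU f := by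
  have h (i : Fin m) : F.d i (F.xe f) = F.xe (F.d i f) + F.e i f := by rw [xe_d, sub_add_cancel]
  simp [ed_apply, lapU_apply, h, xe_e, Finset.sum_add_distrib]

/-- The derivative `∂/∂xᵢ` conjugated by the Kelvin inversion `x ↦ x / |x|²` with the weight
`|x|^(m - 2 - 2k)`, where `k` is the degree in `u`. -/
def kelvinD (k : ℕ) (i : Fin m) : Module.End ℝ S :=
  F.rho • (F.d i : S →ₗ[ℝ] S) - (2 * F.x i) • (F.eulerX : S →ₗ[ℝ] S)
    - ((m - 2 - 2 * k : S) * F.x i) • LinearMap.id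

lemma kelvinD_apply (k : ℕ) (i : Fin m) (f : S) : F.kelvinD k i f =
    F.rho * F.d i f - 2 * F.x i * F.eulerX f - (m - 2 - 2 * k : S) * F.x i * f := rfl

/-- The derivative `kelvinD` transported through the substitution of `IsReflTwist`. -/
def twistD (k : ℕ) (i : Fin m) (f : S) : S :=
  F.rho * F.d i f - 2 * F.x i * F.eulerX f - 2 * F.x i * F.eulerU f - 2 * F.u i * F.xe f
    + 2 * F.ell * F.e i f - (m - 2 - 2 * k : S) * F.x i * f

lemma sum_twistD_twistE (k : ℕ) {f : S} (hf : F.lapU f = 0) :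
    ∑ i, F.twistD k i (F.rho * F.e i f - 2 * F.x i * F.xe f) =
      F.rho * (F.rho * F.ed f - (m + 2 * k - 2 : S) * F.xe f) := by
  have expand (i : Fin m) : F.twistD k i (F.rho * F.e i f - 2 * F.x i * F.xe f) =
      F.rho ^ 2 * F.e i (F.d i f) + 2 * F.rho * F.ell * F.e i (F.e i f)
       - (m - 2 - 2 * k) * F.rho * (F.x i * F.e i f)
       - 2 * F.rho * (F.x i * F.d i (F.xe f)) - 2 * F.rho * (F.x i * F.e i (F.eulerX f))
       - 2 * F.rho * (F.x i * F.e i (F.eulerU f))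
       - 2 * F.rho * (F.u i * F.e i (F.xe f))
       - 2 * F.rho * F.xe f
       - 4 * F.ell * (F.x i * F.e i (F.xe f))
       + 4 * F.xe (F.xe f) * (F.x i * F.u i)
       + (2 * (m - 2 * k) * F.xe f + 4 * F.xe (F.eulerX f + F.eulerU f)) * (F.x i * F.x i) := by
    simp only [twistD, map_sub, map_add, Derivation.leibniz, smul_eq_mul, derivation_two, d_rho,
      F.d_x, if_true, eulerX_rho, eulerX_x, eulerU_rho, eulerU_x, xe_rho, xe_x, e_rho, F.e_x,
      eulerX_xe, eulerU_xe, eulerX_e, eulerU_e, xe_e, F.e_d]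
    ring
  simp only [expand, Finset.sum_add_distrib, Finset.sum_sub_distrib, ← Finset.mul_sum,
    ← eulerX_apply, ← xe_apply, ← eulerU_apply, ← rho_def, ← ell_def, ← ed_apply, ← lapU_apply, hf,
    eulerX_xe, eulerU_xe, map_add, Finset.sum_const, Finset.card_univ, Fintype.card_fin,
    nsmul_eq_mul]
  ring

lemma sum_twistD_twistD {k : ℕ} {f : S} (hU : F.eulerU f = k * f) (hf : F.lapU f = 0) :
    ∑ i, F.twistD k i (F.twistD k i f) =
      F.rho ^ 2 * F.lapX f + 4 * F.rho * F.ell * F.ed f - 4 * F.rho * F.ud (F.xe f)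
        + 4 * F.sigma * F.xe (F.xe f) - 4 * (m + 2 * k - 4 : S) * F.ell * F.xe f := by
  have expand (i : Fin m) : F.twistD k i (F.twistD k i f) =
      F.rho ^ 2 * F.d i (F.d i f) + 4 * F.rho * F.ell * F.e i (F.d i f)
        + 4 * F.ell ^ 2 * F.e i (F.e i f) - 2 * (m - 2) * F.rho * (F.x i * F.d i f)
        - 4 * F.rho * (F.x i * F.d i (F.eulerX f)) - 4 * F.rho * (F.u i * F.d i (F.xe f))
        - 4 * (m - 2) * F.ell * (F.x i * F.e i f) - 8 * F.ell * (F.x i * F.e i (F.eulerX f))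
        - 8 * F.ell * (F.u i * F.e i (F.xe f)) + 4 * F.xe (F.xe f) * (F.u i * F.u i)
        + (4 * m * F.xe f + 8 * F.xe (F.eulerX f)) * (F.x i * F.u i)
        + (4 * F.eulerX (F.eulerX f) + 4 * (m - 1) * F.eulerX f + m * (m - 2) * f)
          * (F.x i * F.x i)
        - (F.rho * (2 * F.eulerX f + (m - 2) * f) + 4 * F.ell * F.xe f) := by
    simp only [twistD, hU, map_sub, map_add, Derivation.leibniz, smul_eq_mul, derivation_two,
      Derivation.map_natCast, d_rho, d_ell, F.d_x, F.d_u, if_true, eulerX_rho, eulerX_x,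
      eulerX_u, eulerX_ell, eulerU_rho, eulerU_x, eulerU_u, eulerU_ell, xe_rho, xe_x, xe_u, xe_ell,
      e_rho, e_ell, F.e_x, F.e_u, eulerX_xe, eulerU_xe, eulerX_e, eulerU_e, xe_e, eulerX_d,
      eulerU_d, xe_d, eulerU_eulerX, F.e_d]
    ring
  simp only [expand, Finset.sum_add_distrib, Finset.sum_sub_distrib, ← Finset.mul_sum,
    ← eulerX_apply, ← xe_apply, ← eulerU_apply, ← ud_apply, ← rho_def, ← ell_def, ← sigma_def,
    ← ed_apply, ← lapX_apply, ← lapU_apply, hf, hU, eulerU_xe, Derivation.leibniz, smul_eq_mul,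
    Derivation.map_natCast, Finset.sum_const, Finset.card_univ, Fintype.card_fin, nsmul_eq_mul]
  ring

lemma sum_u_twistD (k : ℕ) (g : S) :
    ∑ i, F.u i * (F.twistD k i g - 2 * F.x i * g) =
      F.rho * F.ud g - 2 * F.ell * F.eulerX g - 2 * F.sigma * F.xe g
        - (m - 2 * k : S) * F.ell * g := by
  have expand (i : Fin m) : F.u i * (F.twistD k i g - 2 * F.x i * g) =
      F.rho * (F.u i * F.d i g) - (2 * F.eulerX g + 2 * F.eulerU g + (m - 2 * k) * g)
        * (F.x i * F.u i) - 2 * F.xe g * (F.u i * F.u i) + 2 * F.ell * (F.u i * F.e i g) := by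
    rw [twistD]; ring
  simp only [expand, Finset.sum_add_distrib, Finset.sum_sub_distrib, ← Finset.mul_sum,
    ← eulerU_apply, ← ud_apply, ← ell_def, ← sigma_def]
  ring

lemma sum_x_twistD (k : ℕ) (g : S) :
    ∑ i, F.x i * (F.twistD k i g - 2 * F.x i * g) =
      -F.rho * (F.eulerX g + 2 * F.eulerU g + (m - 2 * k : S) * g) := by
  have expand (i : Fin m) : F.x i * (F.twistD k i g - 2 * F.x i * g) =
      F.rho * (F.x i * F.d i g) - (2 * F.eulerX g + 2 * F.eulerU g + (m - 2 * k) * g)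
        * (F.x i * F.x i) - 2 * F.xe g * (F.x i * F.u i) + 2 * F.ell * (F.x i * F.e i g) := by
    rw [twistD]; ring
  simp only [expand, Finset.sum_add_distrib, Finset.sum_sub_distrib, ← Finset.mul_sum,
    ← eulerX_apply, ← xe_apply, ← ell_def, ← rho_def]
  ring

/-- A substitution in the variables `u` alone, as an endomorphism of the algebra of functions of
`x` and `u` that satisfies the chain rule. -/
structure IsFiberSubst (τ : S →ₐ[ℝ] S) : Prop where
  map_x : ∀ i, τ (F.x i) = F.x i
  d_map : ∀ i f, F.d i (τ f) = τ (F.d i f) + ∑ j, F.d i (τ (F.u j)) * τ (F.e j f)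
  e_map : ∀ i f, F.e i (τ f) = ∑ j, F.e i (τ (F.u j)) * τ (F.e j f)

/-- The substitution `u ↦ |x|² u - 2⟨x, u⟩ x`, that is `|x|²` times the reflection in `x`. -/
structure IsReflTwist (τ : S →ₐ[ℝ] S) : Prop extends F.IsFiberSubst τ where
  map_u : ∀ i, τ (F.u i) = F.rho * F.u i - 2 * F.ell * F.x i

section ReflTwist

variable {F} {τ : S →ₐ[ℝ] S}

namespace IsReflTwist

lemma map_rho (hτ : F.IsReflTwist τ) : τ F.rho = F.rho := by simp [rho, hτ.map_x]

lemma map_ell (hτ : F.IsReflTwist τ) : τ F.ell = -F.rho * F.ell := by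
  have expand (i : Fin m) : F.x i * (F.rho * F.u i - 2 * F.ell * F.x i)
      = F.rho * (F.x i * F.u i) - 2 * F.ell * (F.x i * F.x i) := by ring
  rw [ell_def, map_sum]
  simp only [map_mul, hτ.map_x, hτ.map_u, expand, Finset.sum_sub_distrib, ← Finset.mul_sum,
    ← ell_def, ← rho_def]
  ring

lemma map_sigma (hτ : F.IsReflTwist τ) : τ F.sigma = F.rho ^ 2 * F.sigma := by
  have expand (i : Fin m) :
      (F.rho * F.u i - 2 * F.ell * F.x i) * (F.rho * F.u i - 2 * F.ell * F.x i)
      = F.rho ^ 2 * (F.u i * F.u i) - 4 * F.rho * F.ell * (F.x i * F.u i)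
        + 4 * F.ell ^ 2 * (F.x i * F.x i) := by ring
  rw [sigma_def, map_sum]
  simp only [map_mul, hτ.map_u, expand, Finset.sum_add_distrib, Finset.sum_sub_distrib,
    ← Finset.mul_sum, ← ell_def, ← rho_def, ← sigma_def]
  ring

lemma map_xe (hτ : F.IsReflTwist τ) (f : S) : τ (F.xe f) = ∑ i, F.x i * τ (F.e i f) := by
  simp [xe_apply, hτ.map_x]

lemma e_eq (hτ : F.IsReflTwist τ) (i : Fin m) (f : S) :
    F.e i (τ f) = τ (F.rho * F.e i f - 2 * F.x i * F.xe f) := by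
  have expand (j : Fin m) : F.e i (τ (F.u j)) * τ (F.e j f)
      = (if i = j then F.rho * τ (F.e j f) else 0) - 2 * F.x i * (F.x j * τ (F.e j f)) := by
    simp only [hτ.map_u, map_sub, Derivation.leibniz, smul_eq_mul, derivation_two, e_rho, e_ell,
      F.e_x, F.e_u]
    split_ifs <;> ring
  rw [hτ.e_map]
  simp only [expand, Finset.sum_sub_distrib, Finset.sum_ite_eq, Finset.mem_univ, if_true,
    ← Finset.mul_sum, ← hτ.map_xe, map_sub, map_mul, hτ.map_rho, hτ.map_x, map_ofNat]

lemma rho_mul_d_eq (hτ : F.IsReflTwist τ) (i : Fin m) (f : S) :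
    F.rho * F.d i (τ f) = τ (F.rho * F.d i f + 2 * F.x i * F.eulerU f - 2 * F.u i * F.xe f
      + 2 * F.ell * F.e i f) := by
  have expand (j : Fin m) : F.rho * (F.d i (τ (F.u j)) * τ (F.e j f))
      = 2 * F.x i * (τ (F.u j) * τ (F.e j f))
        + (4 * F.x i * F.ell - 2 * F.rho * F.u i) * (F.x j * τ (F.e j f))
        - (if i = j then 2 * F.rho * F.ell * τ (F.e j f) else 0) := by
    simp only [hτ.map_u, map_sub, Derivation.leibniz, smul_eq_mul, derivation_two, d_rho, d_ell,
      F.d_x, F.d_u]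
    split_ifs <;> ring
  have hU : ∑ j, τ (F.u j) * τ (F.e j f) = τ (F.eulerU f) := by simp [eulerU_apply]
  rw [hτ.d_map, mul_add, Finset.mul_sum]
  simp only [expand, Finset.sum_sub_distrib, Finset.sum_add_distrib, Finset.sum_ite_eq,
    Finset.mem_univ, if_true, ← Finset.mul_sum, ← hτ.map_xe, hU]
  simp only [map_add, map_sub, map_mul, hτ.map_rho, hτ.map_x, hτ.map_u, hτ.map_ell, map_ofNat]
  ring

lemma eulerX_eq (hτ : F.IsReflTwist τ) (f : S) :
    F.eulerX (τ f) = τ (F.eulerX f + 2 * F.eulerU f) := by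
  have hw (j : Fin m) : F.eulerX (τ (F.u j)) = 2 * τ (F.u j) := by
    simp only [hτ.map_u, map_sub, Derivation.leibniz, smul_eq_mul, derivation_two, eulerX_rho,
      eulerX_ell, eulerX_x, eulerX_u]
    ring
  have chain : ∑ i, F.x i * ∑ j, F.d i (τ (F.u j)) * τ (F.e j f)
      = ∑ j, F.eulerX (τ (F.u j)) * τ (F.e j f) := by
    simp_rw [eulerX_apply, Finset.mul_sum, Finset.sum_mul, mul_assoc]
    exact Finset.sum_comm
  have expand (i : Fin m) : F.x i * F.d i (τ f)
      = F.x i * τ (F.d i f) + F.x i * ∑ j, F.d i (τ (F.u j)) * τ (F.e j f) := by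
    rw [hτ.d_map, mul_add]
  rw [eulerX_apply]
  simp only [expand, Finset.sum_add_distrib, chain, hw]
  simp only [eulerX_apply, eulerU_apply, hτ.map_x, Finset.mul_sum, mul_assoc, map_add, map_sum,
    map_mul, map_ofNat]

lemma xe_eq (hτ : F.IsReflTwist τ) (f : S) : F.xe (τ f) = -F.rho * τ (F.xe f) := by
  have expand (i : Fin m) : F.x i * F.e i (τ f)
      = F.rho * (F.x i * τ (F.e i f)) - 2 * τ (F.xe f) * (F.x i * F.x i) := by
    rw [hτ.e_eq]
    simp only [map_sub, map_mul, map_ofNat, hτ.map_rho, hτ.map_x]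
    ring
  rw [xe_apply]
  simp only [expand, Finset.sum_sub_distrib, ← Finset.mul_sum, ← hτ.map_xe, ← rho_def]
  ring

lemma eulerU_eq (hτ : F.IsReflTwist τ) (f : S) : F.eulerU (τ f) = τ (F.eulerU f) := by
  have hw (j : Fin m) : F.eulerU (τ (F.u j)) = τ (F.u j) := by
    simp only [hτ.map_u, map_sub, Derivation.leibniz, smul_eq_mul, derivation_two, eulerU_rho,
      eulerU_ell, eulerU_x, eulerU_u]
    ring
  have chain : ∑ i, F.u i * ∑ j, F.e i (τ (F.u j)) * τ (F.e j f)
      = ∑ j, F.eulerU (τ (F.u j)) * τ (F.e j f) := by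
    simp_rw [eulerU_apply, Finset.mul_sum, Finset.sum_mul, mul_assoc]
    exact Finset.sum_comm
  have expand (i : Fin m) : F.u i * F.e i (τ f)
      = F.u i * ∑ j, F.e i (τ (F.u j)) * τ (F.e j f) := by rw [hτ.e_map]
  rw [eulerU_apply]
  simp only [expand, chain, hw]
  simp only [eulerU_apply, map_sum, map_mul]

lemma kelvinD_eq (hτ : F.IsReflTwist τ) (k : ℕ) (i : Fin m) (f : S) :
    F.kelvinD k i (τ f) = τ (F.twistD k i f) := by
  rw [kelvinD_apply, twistD, hτ.rho_mul_d_eq, hτ.eulerX_eq]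
  simp only [map_add, map_sub, map_mul, hτ.map_x, map_ofNat, map_natCast]
  ring

end IsReflTwist
end ReflTwist

lemma kelvinD_rho_mul (k : ℕ) (i : Fin m) (f : S) :
    F.kelvinD k i (F.rho * f) = F.rho * (F.kelvinD k i f - 2 * F.x i * f) := by
  simp only [kelvinD_apply, Derivation.leibniz, smul_eq_mul, d_rho, eulerX_rho]
  ring

/-- `∑ᵢ Kᵢ ∂/∂uᵢ` for the conjugated derivatives `Kᵢ = kelvinD k i`. -/
def kelvinDiv (k : ℕ) : Module.End ℝ S := ∑ i, F.kelvinD k i * (F.e i : S →ₗ[ℝ] S)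

/-- `∑ᵢ uᵢ Kᵢ` for the conjugated derivatives `Kᵢ = kelvinD k i`. -/
def kelvinUd (k : ℕ) : Module.End ℝ S := ∑ i, LinearMap.mulLeft ℝ (F.u i) * F.kelvinD k i

/-- `∑ᵢ Kᵢ²` for the conjugated derivatives `Kᵢ = kelvinD k i`. -/
def kelvinLap (k : ℕ) : Module.End ℝ S := ∑ i, F.kelvinD k i * F.kelvinD k i

lemma kelvinDiv_apply (k : ℕ) (f : S) :
    F.kelvinDiv k f = ∑ i, F.kelvinD k i (F.e i f) := by simp [kelvinDiv]

lemma kelvinUd_apply (k : ℕ) (f : S) :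
    F.kelvinUd k f = ∑ i, F.u i * F.kelvinD k i f := by simp [kelvinUd]

lemma kelvinLap_apply (k : ℕ) (f : S) :
    F.kelvinLap k f = ∑ i, F.kelvinD k i (F.kelvinD k i f) := by simp [kelvinLap]

lemma kelvinDiv_rho_mul (k : ℕ) (f : S) :
    F.kelvinDiv k (F.rho * f) = F.rho * (F.kelvinDiv k f - 2 * F.xe f) := by
  simp only [kelvinDiv_apply, Derivation.leibniz, smul_eq_mul, e_rho, mul_zero, add_zero,
    kelvinD_rho_mul, ← Finset.mul_sum, Finset.sum_sub_distrib, mul_assoc, xe_apply]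

/-- The bosonic Laplacian, cleared of denominators: `(m + 2k - 2)(m + 2k - 4) 𝒟ₖ`. -/
def bosonicLap (k : ℕ) (f : S) : S :=
  (m + 2 * k - 2) * (m + 2 * k - 4) * F.lapX f - 4 * (m + 2 * k - 4) * F.ud (F.ed f)
    + 4 * F.sigma * F.ed (F.ed f)

section ReflTwist

variable {F} {τ : S →ₐ[ℝ] S}

namespace IsReflTwist

lemma kelvinDiv_eq (hτ : F.IsReflTwist τ) (k : ℕ) {f : S} (hf : F.lapU f = 0) :
    F.kelvinDiv k (τ f) = F.rho * τ (F.rho * F.ed f - (m + 2 * k - 2 : S) * F.xe f) := by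
  simp only [kelvinDiv_apply, hτ.e_eq, hτ.kelvinD_eq, ← map_sum, F.sum_twistD_twistE k hf]
  rw [map_mul, hτ.map_rho]

lemma kelvinDiv_kelvinDiv_eq (hτ : F.IsReflTwist τ) (k : ℕ) {f : S} (hf : F.lapU f = 0) :
    F.kelvinDiv k (F.kelvinDiv k (τ f)) = F.rho ^ 2 * τ (F.rho ^ 2 * F.ed (F.ed f)
      - 2 * (m + 2 * k - 4 : S) * F.rho * F.xe (F.ed f)
      + (m + 2 * k - 2 : S) * (m + 2 * k - 4 : S) * F.xe (F.xe f)) := by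
  have hP (L : Module.End ℝ S) (h : S) :
      L ((m + 2 * k - 2 : S) * h) = (m + 2 * k - 2 : S) * L h := by
    simpa using moduleEnd_intCast_mul L (m + 2 * k - 2) h
  have hg : F.lapU (F.rho * F.ed f - (m + 2 * k - 2 : S) * F.xe f) = 0 := by
    simp only [map_sub, hP, lapU_rho_mul, lapU_ed, lapU_xe, hf, map_zero, mul_zero, sub_zero]
  rw [hτ.kelvinDiv_eq k hf, kelvinDiv_rho_mul, hτ.kelvinDiv_eq k hg, hτ.xe_eq]
  simp only [map_sub, hP, ed_rho_mul, ed_xe, hf]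
  simp only [map_sub, map_add, map_mul, map_pow, map_ofNat, map_natCast, hτ.map_rho,
    Derivation.leibniz, smul_eq_mul, Derivation.map_natCast, derivation_two, xe_rho, map_zero]
  ring

lemma kelvinUd_rho_mul_eq (hτ : F.IsReflTwist τ) (k : ℕ) (g : S) :
    F.kelvinUd k (F.rho * τ g) = τ (F.rho * F.ud g - 2 * F.sigma * F.xe g
      + 4 * F.ell * F.eulerU g + (m - 2 * k : S) * F.ell * g) := by
  have expand (i : Fin m) : F.u i * F.kelvinD k i (F.rho * τ g)
      = τ (F.u i * (F.twistD k i g - 2 * F.x i * g))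
        + 2 * F.ell * τ (F.x i * (F.twistD k i g - 2 * F.x i * g)) := by
    rw [kelvinD_rho_mul, hτ.kelvinD_eq]
    simp only [map_mul, map_sub, map_ofNat, hτ.map_u, hτ.map_x]
    ring
  simp only [kelvinUd_apply, expand, Finset.sum_add_distrib, ← Finset.mul_sum]
  rw [← map_sum, ← map_sum, sum_u_twistD, sum_x_twistD]
  simp only [map_mul, map_sub, map_add, map_neg, map_ofNat, map_natCast, hτ.map_ell, hτ.map_rho]
  ring

lemma kelvinLap_eq (hτ : F.IsReflTwist τ) {k : ℕ} {f : S} (hU : F.eulerU f = k * f)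
    (hf : F.lapU f = 0) :
    F.kelvinLap k (τ f) = τ (F.rho ^ 2 * F.lapX f + 4 * F.rho * F.ell * F.ed f
      - 4 * F.rho * F.ud (F.xe f) + 4 * F.sigma * F.xe (F.xe f)
      - 4 * (m + 2 * k - 4 : S) * F.ell * F.xe f) := by
  simp only [kelvinLap_apply, hτ.kelvinD_eq]
  rw [← map_sum, F.sum_twistD_twistD hU hf]

theorem map_bosonicLap (hτ : F.IsReflTwist τ) {k : ℕ} {f : S} (hU : F.eulerU f = k * f)
    (hf : F.lapU f = 0) :
    (m + 2 * k - 2) * (m + 2 * k - 4) * F.kelvinLap k (τ f)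
        - 4 * (m + 2 * k - 4) * F.kelvinUd k (F.kelvinDiv k (τ f))
        + 4 * F.sigma * F.kelvinDiv k (F.kelvinDiv k (τ f))
      = F.rho ^ 2 * τ (F.bosonicLap k f) := by
  have hUed : F.eulerU (F.ed f) = k * F.ed f - F.ed f := by
    simp [ed_apply, eulerU_e, eulerU_d, hU, Finset.mul_sum]
  rw [hτ.kelvinDiv_kelvinDiv_eq k hf, hτ.kelvinLap_eq hU hf, hτ.kelvinDiv_eq k hf,
    hτ.kelvinUd_rho_mul_eq, bosonicLap]
  simp only [map_sub, map_add, map_mul, map_pow, map_ofNat, map_natCast, map_zero,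
    Derivation.leibniz, smul_eq_mul, Derivation.map_natCast, derivation_two, hτ.map_rho,
    hτ.map_sigma, hτ.map_ell, ud_rho, xe_rho, eulerU_xe, eulerU_rho, hUed, hU]
  ring

end IsReflTwist
end ReflTwist

lemma kelvinD_comm (k : ℕ) (i j : Fin m) (f : S) :
    F.kelvinD k i (F.kelvinD k j f) = F.kelvinD k j (F.kelvinD k i f) := by
  simp only [kelvinD_apply, map_sub, Derivation.leibniz, smul_eq_mul, derivation_two,
    Derivation.map_natCast, d_rho, F.d_x, eulerX_rho, eulerX_x, eulerX_d, F.d_d i j,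
    eq_comm (a := j)]
  ring

lemma kelvinD_u_mul (k : ℕ) (i j : Fin m) (f : S) :
    F.kelvinD k i (F.u j * f) = F.u j * F.kelvinD k i f := by
  simp only [kelvinD_apply, Derivation.leibniz, smul_eq_mul, F.d_u, eulerX_u]
  ring

lemma e_kelvinD (k : ℕ) (i j : Fin m) (f : S) :
    F.e j (F.kelvinD k i f) = F.kelvinD k i (F.e j f) := by
  simp only [kelvinD_apply, map_sub, Derivation.leibniz, smul_eq_mul, derivation_two,
    Derivation.map_natCast, e_rho, F.e_x, eulerX_e, F.e_d]
  ring

lemma kelvinD_kelvinDiv (k : ℕ) (i : Fin m) (f : S) :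
    F.kelvinD k i (F.kelvinDiv k f) = F.kelvinDiv k (F.kelvinD k i f) := by
  simp only [kelvinDiv_apply, map_sum, e_kelvinD]
  exact Finset.sum_congr rfl fun j _ => F.kelvinD_comm k i j _

lemma kelvinDiv_u_mul (k : ℕ) (j : Fin m) (f : S) :
    F.kelvinDiv k (F.u j * f) = F.u j * F.kelvinDiv k f + F.kelvinD k j f := by
  have expand (i : Fin m) : F.kelvinD k i (F.e i (F.u j * f))
      = F.u j * F.kelvinD k i (F.e i f) + if i = j then F.kelvinD k i f else 0 := by
    split_ifs with h <;> simp [F.e_u, kelvinD_u_mul, h]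
  simp only [kelvinDiv_apply, expand, Finset.sum_add_distrib, Finset.mul_sum, Finset.sum_ite_eq',
    Finset.mem_univ, if_true]

lemma kelvinDiv_mul_kelvinUd (k : ℕ) :
    F.kelvinDiv k * F.kelvinUd k = F.kelvinUd k * F.kelvinDiv k + F.kelvinLap k := by
  ext f
  simp only [Module.End.mul_apply, LinearMap.add_apply, kelvinUd_apply, map_sum, kelvinDiv_u_mul,
    kelvinD_kelvinDiv, kelvinLap_apply, Finset.sum_add_distrib]

lemma kelvinDiv_mul_sigma (k : ℕ) :
    F.kelvinDiv k * LinearMap.mulLeft ℝ F.sigma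
      = LinearMap.mulLeft ℝ F.sigma * F.kelvinDiv k + 2 * F.kelvinUd k := by
  ext f
  simp only [Module.End.mul_apply, LinearMap.mulLeft_apply, LinearMap.add_apply, two_mul,
    kelvinUd_apply, sigma_def, Finset.sum_mul, map_sum, mul_assoc, kelvinDiv_u_mul,
    kelvinD_u_mul, mul_add, Finset.sum_add_distrib]
  abel

lemma commute_kelvinLap_kelvinDiv (k : ℕ) : Commute (F.kelvinLap k) (F.kelvinDiv k) := by
  ext f
  simp only [Module.End.mul_apply, kelvinLap_apply, map_sum, kelvinD_kelvinDiv]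

lemma commute_kelvinLap_mulLeft_u (k : ℕ) (j : Fin m) :
    Commute (F.kelvinLap k) (LinearMap.mulLeft ℝ (F.u j)) := by
  ext f
  simp only [Module.End.mul_apply, LinearMap.mulLeft_apply, kelvinLap_apply, kelvinD_u_mul,
    Finset.mul_sum]

lemma commute_kelvinLap_kelvinUd (k : ℕ) : Commute (F.kelvinLap k) (F.kelvinUd k) := by
  refine Commute.sum_right _ _ _ fun j _ => (F.commute_kelvinLap_mulLeft_u k j).mul_right ?_
  refine Commute.sum_left _ _ _ fun i _ => ?_
  have : Commute (F.kelvinD k i) (F.kelvinD k j) := LinearMap.ext (F.kelvinD_comm k i j)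
  exact this.mul_left this

lemma commute_kelvinLap_sigma (k : ℕ) :
    Commute (F.kelvinLap k) (LinearMap.mulLeft ℝ F.sigma) := by
  ext f
  simp only [Module.End.mul_apply, LinearMap.mulLeft_apply, kelvinLap_apply, sigma_def,
    Finset.sum_mul, map_sum, kelvinD_u_mul, mul_assoc]
  exact Finset.sum_comm

lemma eulerU_kelvinDiv (k : ℕ) (f : S) :
    F.eulerU (F.kelvinDiv k f) = F.kelvinDiv k (F.eulerU f) - F.kelvinDiv k f := by
  have h (i : Fin m) (g : S) : F.eulerU (F.kelvinD k i g) = F.kelvinD k i (F.eulerU g) := by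
    simp only [eulerU_apply, ← kelvinD_u_mul, e_kelvinD, map_sum]
  simp [kelvinDiv_apply, h, eulerU_e]

lemma eulerU_kelvinDiv_pow {k : ℕ} {f : S} (hU : F.eulerU f = (k : ℝ) • f) (n : ℕ) :
    F.eulerU ((F.kelvinDiv k ^ n) f) = ((k : ℝ) - n) • (F.kelvinDiv k ^ n) f := by
  induction n with
  | zero => simpa using hU
  | succ n ih =>
    rw [pow_succ', Module.End.mul_apply, eulerU_kelvinDiv, ih, map_smul]
    push_cast
    module

section ReflTwist

variable {F} {τ : S →ₐ[ℝ] S}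

/-- The bosonic Laplacian of `f` need only vanish modulo a differential ideal, which allows for
equations that hold on an open set. -/
theorem IsReflTwist.kelvinLap_pow_mem (hτ : F.IsReflTwist τ) (hm : 3 ≤ m) (hm4 : m ≠ 4)
    (h0 : ∀ g, F.eulerU g = -g → g = 0) {W : Ideal S} (hWd : ∀ i, ∀ w ∈ W, F.d i w ∈ W)
    (hWe : ∀ i, ∀ w ∈ W, F.e i w ∈ W) {k : ℕ} {f : S} (hU : F.eulerU f = k * f)
    (hf : F.lapU f = 0) (hB : τ (F.bosonicLap k f) ∈ W) :
    (F.kelvinLap k ^ (k + 1)) (τ f) ∈ W := by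
  have hWK (i : Fin m) (w : S) (hw : w ∈ W) : F.kelvinD k i w ∈ W := by
    rw [kelvinD_apply, eulerX_apply]
    exact W.sub_mem (W.sub_mem (W.mul_mem_left _ (hWd i w hw)) (W.mul_mem_left _ (W.sum_mem
      fun j _ => W.mul_mem_left _ (hWd j w hw)))) (W.mul_mem_left _ hw)
  have hUτ : F.eulerU (τ f) = (k : ℝ) • τ f := by
    rw [hτ.eulerU_eq, hU, map_mul, map_natCast, Algebra.smul_def, map_natCast]
  refine pow_apply_mem_of_bosonic (F.kelvinDiv_mul_kelvinUd k) (F.kelvinDiv_mul_sigma k)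
    (F.commute_kelvinLap_kelvinDiv k) (F.commute_kelvinLap_kelvinUd k)
    (F.commute_kelvinLap_sigma k) (W := W.restrictScalars ℝ) (fun w hw => ?_) (fun w hw => ?_)
    (fun w hw => W.mul_mem_left _ hw) (fun w hw => ?_) (k + 1) (m + 2 * k - 2) (τ f) ?_ ?_ ?_
  · rw [kelvinDiv_apply]
    exact W.sum_mem fun i _ => hWK i _ (hWe i w hw)
  · rw [kelvinUd_apply]
    exact W.sum_mem fun i _ => W.mul_mem_left _ (hWK i w hw)
  · rw [kelvinLap_apply]
    exact W.sum_mem fun i _ => hWK i _ (hWK i w hw)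
  · intro j hj
    have hj' : (j : ℝ) ≤ k := by exact_mod_cast Nat.lt_succ_iff.mp hj
    have hm' : (3 : ℝ) ≤ m := by exact_mod_cast hm
    refine mul_ne_zero (by linarith) fun h => ?_
    have : (m : ℤ) + 2 * k - 2 - 2 - 2 * j = 0 := by exact_mod_cast h
    omega
  · rw [h0 ((F.kelvinDiv k ^ (k + 1)) (τ f))
      (by rw [F.eulerU_kelvinDiv_pow hUτ]; push_cast; module)]
    exact W.zero_mem
  · have h := W.mul_mem_left (F.rho ^ 2) hB
    rw [← hτ.map_bosonicLap hU hf] at h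
    convert h using 1
    simp only [Submodule.restrictScalars_mem, Algebra.smul_def, map_mul, map_sub, map_add,
      map_natCast, map_ofNat, LinearMap.mulLeft_apply, mul_assoc, sub_sub]
    norm_num

end ReflTwist

lemma eulerX_kelvinD (k : ℕ) (i : Fin m) (f : S) :
    F.eulerX (F.kelvinD k i f) = F.kelvinD k i (F.eulerX f) + F.kelvinD k i f := by
  simp only [kelvinD_apply, map_sub, Derivation.leibniz, smul_eq_mul, derivation_two,
    Derivation.map_natCast, eulerX_rho, eulerX_x, eulerX_d]
  ring

lemma eulerX_kelvinLap_pow (k n : ℕ) (f : S) : F.eulerX ((F.kelvinLap k ^ n) f)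
    = (F.kelvinLap k ^ n) (F.eulerX f + (2 * n : ℝ) • f) := by
  have step (g : S) : F.eulerX (F.kelvinLap k g) = F.kelvinLap k (F.eulerX g + (2 : ℝ) • g) := by
    simp only [kelvinLap_apply, map_sum, map_add, eulerX_kelvinD, two_smul,
      Finset.sum_add_distrib, add_assoc]
  induction n generalizing f with
  | zero => simp
  | succ n ih =>
    rw [pow_succ, Module.End.mul_apply, Module.End.mul_apply, ih, step, ← map_smul, ← map_add]
    congr 2
    push_cast
    module

lemma kelvinLap_eq_lapX (k : ℕ) (f : S) : F.kelvinLap k f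
    = F.rho * (F.rho * F.lapX f - 4 * k * F.eulerX f - 2 * k * (m - 2 - 2 * k) * f) := by
  have expand (i : Fin m) : F.kelvinD k i (F.kelvinD k i f) =
      F.rho ^ 2 * F.d i (F.d i f)
        - 2 * (m - 2 - 2 * k) * F.rho * (F.x i * F.d i f)
        - 2 * F.rho * (F.x i * F.d i (F.eulerX f)) - 2 * F.rho * (F.x i * F.d i (F.eulerX f))
        - (2 * F.eulerX f + (m - 2 - 2 * k) * f) * F.rho
        + (F.x i * F.x i) * (4 * F.eulerX (F.eulerX f) + 4 * F.eulerX f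
          + 4 * (m - 2 - 2 * k) * F.eulerX f + 2 * (m - 2 - 2 * k) * f
          + (m - 2 - 2 * k) ^ 2 * f) := by
    simp only [kelvinD_apply, map_sub, Derivation.leibniz, smul_eq_mul, derivation_two,
      Derivation.map_natCast, d_rho, F.d_x, eulerX_rho, eulerX_x, eulerX_d, if_true]
    ring
  simp only [kelvinLap_apply, expand, Finset.sum_add_distrib, Finset.sum_sub_distrib,
    ← Finset.mul_sum, ← Finset.sum_mul, ← lapX_apply, ← eulerX_apply, ← rho_def,
    Finset.sum_const, Finset.card_univ, Fintype.card_fin, nsmul_eq_mul]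
  ring

/-- A functional with the formal properties of `f ↦ ∫_{|x|² = c} f(x, u) dS(x)`, where `u` is
fixed. -/
structure IsSphereFunctional (A : S →ₗ[ℝ] ℝ) (c : ℝ) : Prop where
  map_rho_mul : ∀ f, A (F.rho * f) = c * A f
  map_rotation : ∀ i j f, A (F.x j * F.d i f) = A (F.x i * F.d j f)

section SphereFunctional

variable {F} {A : S →ₗ[ℝ] ℝ} {c : ℝ}

namespace IsSphereFunctional

lemma map_rho_mul_sum_d (hA : F.IsSphereFunctional A c) (w : Fin m → S) :
    A (F.rho * ∑ i, F.d i (w i))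
      = A (F.eulerX (∑ i, F.x i * w i) + (m - 2 : ℝ) • ∑ i, F.x i * w i) := by
  have expand (i : Fin m) : F.rho * F.d i (w i) = F.eulerX (F.x i * w i)
      + (m - 2 : ℝ) • (F.x i * w i) + ∑ j, (F.x j * F.d i (F.x j * w i)
        - F.x i * F.d j (F.x j * w i)) := by
    have summand (j : Fin m) : F.x j * F.d i (F.x j * w i) - F.x i * F.d j (F.x j * w i)
        = (if i = j then F.x j * w i else 0) + F.d i (w i) * (F.x j * F.x j)
          - F.x i * w i - F.x i * (F.x j * F.d j (w i)) := by
      simp only [Derivation.leibniz, smul_eq_mul, F.d_x, if_true]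
      split_ifs <;> ring
    rw [Finset.sum_congr rfl fun j _ => summand j]
    simp only [Finset.sum_add_distrib, Finset.sum_sub_distrib, ← Finset.mul_sum,
      ← eulerX_apply, ← rho_def, Finset.sum_ite_eq, Finset.mem_univ, if_true, Finset.sum_const,
      Finset.card_univ, Fintype.card_fin, nsmul_eq_mul, Derivation.leibniz, smul_eq_mul, eulerX_x,
      Algebra.smul_def (R := ℝ), map_sub, map_natCast, map_ofNat]
    ring
  rw [Finset.mul_sum, map_sum F.eulerX, Finset.smul_sum, ← Finset.sum_add_distrib, map_sum,
    map_sum]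
  refine Finset.sum_congr rfl fun i _ => ?_
  rw [expand, map_add _ (_ + _), map_sum, Finset.sum_eq_zero, add_zero]
  exact fun j _ => by rw [map_sub, hA.map_rotation, sub_self]

lemma map_rho_mul_lapX (hA : F.IsSphereFunctional A c) (f : S) :
    A (F.rho * F.lapX f) = A (F.eulerX (F.eulerX f) + (m - 2 : ℝ) • F.eulerX f) := by
  rw [lapX_apply, hA.map_rho_mul_sum_d, ← eulerX_apply]

lemma map_kelvinLap (hA : F.IsSphereFunctional A c) (k : ℕ) (f : S) :
    A (F.kelvinLap k f) = c * A (F.eulerX (F.eulerX f) + (m - 2 - 4 * k : ℝ) • F.eulerX f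
      - (2 * k * (m - 2 - 2 * k) : ℝ) • f) := by
  have hsmul : 4 * k * F.eulerX f = (4 * k : ℝ) • F.eulerX f
      ∧ 2 * k * (m - 2 - 2 * k) * f = (2 * k * (m - 2 - 2 * k) : ℝ) • f := by
    simp [Algebra.smul_def, map_ofNat]
  rw [kelvinLap_eq_lapX, hsmul.1, hsmul.2, hA.map_rho_mul, map_sub, map_sub, hA.map_rho_mul_lapX,
    ← map_sub, ← map_sub]
  congr 2
  module

end IsSphereFunctional

/-- `(E + 2n)(E + 2n + m - 2) f` for the Euler operator `E = ⟨x, ∂ₓ⟩`, which describes the action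
of `|x|² Δ` on the spherical means of `f`. -/
def radialFactor (F : BivariateFrame m S) (n : ℕ) (f : S) : S :=
  F.eulerX (F.eulerX f) + (4 * n + m - 2 : ℝ) • F.eulerX f + (2 * n * (2 * n + m - 2) : ℝ) • f

lemma eulerU_eulerX_eq {k : ℕ} {f : S} (hU : F.eulerU f = k * f) :
    F.eulerU (F.eulerX f) = k * F.eulerX f := by
  rw [eulerU_eulerX, hU]
  simp

lemma eulerU_radialFactor_eq {k : ℕ} {f : S} (hU : F.eulerU f = k * f) (n : ℕ) :
    F.eulerU (F.radialFactor n f) = k * F.radialFactor n f := by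
  have hUE := eulerU_eulerX_eq hU
  simp only [radialFactor, map_add, Derivation.map_smul, hU, hUE, eulerU_eulerX_eq hUE, mul_add,
    mul_smul_comm]

lemma eulerX_radialFactor (n : ℕ) (f : S) :
    F.eulerX (F.radialFactor n f) = F.radialFactor n (F.eulerX f) := by
  simp only [radialFactor, map_add, Derivation.map_smul]

lemma IsSphereFunctional.map_kelvinLap_pow_succ (hA : F.IsSphereFunctional A c)
    {τ : S →ₐ[ℝ] S} (hτ : F.IsReflTwist τ) {k : ℕ} {f : S} (hU : F.eulerU f = k * f) (n : ℕ) :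
    A ((F.kelvinLap k ^ (n + 1)) (τ f))
      = c * A ((F.kelvinLap k ^ n) (τ (F.radialFactor n f))) := by
  have hE {g : S} (hg : F.eulerU g = k * g) :
      F.eulerX (τ g) = τ (F.eulerX g) + (2 * k : ℝ) • τ g := by
    rw [hτ.eulerX_eq, hg, map_add]
    simp [Algebra.smul_def, mul_assoc, map_ofNat]
  rw [pow_succ', Module.End.mul_apply, hA.map_kelvinLap, eulerX_kelvinLap_pow,
    eulerX_kelvinLap_pow, ← map_smul (F.kelvinLap k ^ n), ← map_smul (F.kelvinLap k ^ n), ← map_add,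
    ← map_sub, radialFactor]
  congr 3
  simp only [map_add, map_smul, Derivation.map_smul, hE hU, hE (eulerU_eulerX_eq hU)]
  module

section Shear

/-- The substitution `u ↦ u - ⟨x, u⟩ x`, which interpolates between the identity at `x = 0` and the
reflection in `x` at `|x|² = 2`. -/
structure IsShear (F : BivariateFrame m S) (τ : S →ₐ[ℝ] S) : Prop extends F.IsFiberSubst τ where
  map_u : ∀ i, τ (F.u i) = F.u i - F.ell * F.x i

namespace IsShear

variable {τ : S →ₐ[ℝ] S}

lemma d_eq (hτ : F.IsShear τ) (i : Fin m) (f : S) :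
    F.d i (τ f) = τ (F.d i f) - F.u i * τ (F.xe f) - F.ell * τ (F.e i f) := by
  have hu (j : Fin m) : F.d i (τ (F.u j)) * τ (F.e j f)
      = -(F.u i * (F.x j * τ (F.e j f))) - if i = j then F.ell * τ (F.e i f) else 0 := by
    rw [hτ.map_u, map_sub, Derivation.leibniz, smul_eq_mul, smul_eq_mul, d_ell, F.d_u, F.d_x]
    split_ifs with h
    · rw [h]; ring
    · ring
  rw [hτ.d_map, Finset.sum_congr rfl fun j _ => hu j, xe_apply, map_sum]
  simp only [map_mul, hτ.map_x, Finset.sum_sub_distrib, Finset.sum_neg_distrib, ← Finset.mul_sum,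
    Finset.sum_ite_eq, Finset.mem_univ, if_true]
  ring

lemma eulerX_eq (hτ : F.IsShear τ) (f : S) :
    F.eulerX (τ f) = τ (F.eulerX f) - 2 * F.ell * τ (F.xe f) := by
  have expand (i : Fin m) : F.x i * F.d i (τ f) = τ (F.x i * F.d i f)
      - (F.x i * F.u i) * τ (F.xe f) - F.ell * τ (F.x i * F.e i f) := by
    rw [hτ.d_eq, map_mul, map_mul, hτ.map_x]
    ring
  simp only [eulerX_apply, expand, Finset.sum_sub_distrib, ← Finset.mul_sum, ← Finset.sum_mul,
    ← map_sum, ← xe_apply, ← ell_def]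
  ring

lemma sum_u_mul (hτ : F.IsShear τ) (g : Fin m → S) : ∑ i, F.u i * τ (g i)
    = τ (∑ i, F.u i * g i) + F.ell * τ (∑ i, F.x i * g i) := by
  simp only [map_sum, map_mul, hτ.map_u, hτ.map_x, Finset.mul_sum, ← Finset.sum_add_distrib]
  exact Finset.sum_congr rfl fun i _ => by ring

lemma sum_d_ell_mul (hτ : F.IsShear τ) {k : ℕ} {q : S} (hd : ∀ i, F.d i q = 0)
    (hU : F.eulerU q = k * q) (hq : F.lapU q = 0) :
    4 * ∑ i, F.d i (F.ell * τ (F.e i q)) = 4 * k * τ q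
      + 2 * (k - 1) * F.eulerX (τ q) - F.eulerX (F.eulerX (τ q)) := by
  have hxe : F.eulerX (F.xe q) = F.xe q := by
    rw [eulerX_xe, eulerX_apply]
    simp [hd]
  have hEq : F.eulerX q = 0 := by simp [eulerX_apply, hd]
  have expand (i : Fin m) : F.d i (F.ell * τ (F.e i q)) = F.u i * τ (F.e i q)
      - F.ell * (F.u i * τ (F.e i (F.xe q))) - F.ell ^ 2 * τ (F.e i (F.e i q)) := by
    rw [Derivation.leibniz, smul_eq_mul, smul_eq_mul, d_ell, hτ.d_eq, ← F.e_d, hd, xe_e]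
    simp only [map_zero]
    ring
  simp only [expand, Finset.sum_sub_distrib, ← Finset.mul_sum, hτ.sum_u_mul, ← map_sum,
    ← eulerU_apply, ← xe_apply, ← lapU_apply, hq, eulerU_xe, hU, hτ.eulerX_eq, hEq, map_zero,
    zero_sub, map_neg, Derivation.leibniz, smul_eq_mul, eulerX_ell, hxe, derivation_two,
    Derivation.map_natCast, map_sub, map_add, map_mul, map_natCast]
  ring

end IsShear

lemma IsSphereFunctional.map_shear {A : S →ₗ[ℝ] ℝ} {c : ℝ} (hA : F.IsSphereFunctional A c)
    {τ : S →ₐ[ℝ] S} (hτ : F.IsShear τ) {k : ℕ} {q : S} (hd : ∀ i, F.d i q = 0)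
    (hU : F.eulerU q = k * q) (hq : F.lapU q = 0) :
    c * (A (F.eulerX (F.eulerX (τ q))) - 2 * (k - 1) * A (F.eulerX (τ q)) - 4 * k * A (τ q))
      = 2 * (A (F.eulerX (F.eulerX (τ q))) + (m - 2) * A (F.eulerX (τ q))) := by
  have hsum : ∑ i, F.x i * (F.ell * τ (F.e i q)) = (-1 / 2 : ℝ) • F.eulerX (τ q) := by
    have : F.eulerX (τ q) = (-2 : ℝ) • ∑ i, F.x i * (F.ell * τ (F.e i q)) := by
      rw [hτ.eulerX_eq, eulerX_apply, xe_apply]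
      simp only [hd, mul_zero, Finset.sum_const_zero, map_zero, map_sum, map_mul, hτ.map_x,
        Algebra.smul_def, map_neg, map_ofNat, mul_left_comm _ F.ell, ← Finset.mul_sum]
      ring
    rw [this, smul_smul]
    norm_num
  have hdiv := hA.map_rho_mul_sum_d fun i => F.ell * τ (F.e i q)
  have hfour := congrArg A (hτ.sum_d_ell_mul hd hU hq)
  have hsmul : 4 * ∑ i, F.d i (F.ell * τ (F.e i q))
        = (4 : ℝ) • ∑ i, F.d i (F.ell * τ (F.e i q))
      ∧ 4 * k * τ q = (4 * k : ℝ) • τ q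
      ∧ 2 * (k - 1) * F.eulerX (τ q) = (2 * (k - 1) : ℝ) • F.eulerX (τ q) := by
    simp [Algebra.smul_def, map_ofNat]
  rw [hsum, hA.map_rho_mul, Derivation.map_smul] at hdiv
  rw [hsmul.1, hsmul.2.1, hsmul.2.2] at hfour
  simp only [map_add, map_sub, map_smul, smul_eq_mul] at hdiv hfour
  linear_combination c * hfour - 4 * hdiv

end Shear

end SphereFunctional

lemma eulerU_bosonicLap {k : ℕ} {f : S} (hU : F.eulerU f = k * f) :
    F.eulerU (F.bosonicLap k f) = k * F.bosonicLap k f := by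
  have hlap : F.eulerU (F.lapX f) = k * F.lapX f := by
    simp [lapX_apply, eulerU_d, hU, Finset.mul_sum]
  have hed {g c : S} (hc : ∀ i, F.d i c = 0) (hc' : ∀ i, F.e i c = 0)
      (hg : F.eulerU g = c * g) : F.eulerU (F.ed g) = c * F.ed g - F.ed g := by
    simp [ed_apply, eulerU_e, eulerU_d, hg, Finset.mul_sum, hc, hc']
  have hud (g : S) : F.eulerU (F.ud g) = F.ud (F.eulerU g) + F.ud g := by
    simp [ud_apply, eulerU_u, eulerU_d, Finset.sum_add_distrib, mul_comm]
  have hsigma : F.eulerU F.sigma = 2 * F.sigma := by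
    simp [sigma, eulerU_u, Finset.sum_add_distrib, two_mul]
  have h1 := hed (by simp) (by simp) hU
  have h2 := hed (g := F.ed f) (c := k - 1) (by simp) (by simp) (by rw [h1]; ring)
  have h4 : F.eulerU 4 = 0 := by simpa using F.eulerU.map_natCast 4
  simp only [bosonicLap, map_add, map_sub, Derivation.leibniz, smul_eq_mul, hlap, h1, h2, hud,
    hsigma, h4, derivation_two, Derivation.map_natCast]
  ring

end BivariateFrame

end Algebra

section SmoothFunctions

open scoped ContDiff

variable {E : Type*} [NormedAddCommGroup E] [NormedSpace ℝ E]

lemma fderiv_fderiv_apply {V : Type*} [NormedAddCommGroup V] [NormedSpace ℝ V] {f : E → V} {p : E}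
    (hf : DifferentiableAt ℝ (fderiv ℝ f) p) (v w : E) :
    fderiv ℝ (fun q => fderiv ℝ f q v) p w = fderiv ℝ (fderiv ℝ f) p w v := by
  rw [fderiv_clm_apply hf (differentiableAt_const v)]
  simp

variable (E) in
/-- The algebra of smooth real functions on `E`. -/
def smoothFun : Subalgebra ℝ (E → ℝ) where
  carrier := {f | ContDiff ℝ ∞ f}
  mul_mem' hf hg := by
    rw [Set.mem_ofPred_eq] at hf hg ⊢
    exact hf.mul hg
  add_mem' hf hg := by
    rw [Set.mem_ofPred_eq] at hf hg ⊢
    exact hf.add hg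
  algebraMap_mem' c := by
    rw [Set.mem_ofPred_eq]
    exact (contDiff_const : ContDiff ℝ ∞ fun _ : E => c)

namespace smoothFun

lemma contDiff (f : smoothFun E) : ContDiff ℝ ∞ f.1 := f.2

lemma continuous (f : smoothFun E) : Continuous f.1 := (contDiff f).continuous

lemma differentiable (f : smoothFun E) : Differentiable ℝ f.1 :=
  (contDiff f).differentiable (by simp)

lemma contDiff_fderiv (f : smoothFun E) : ContDiff ℝ ∞ (fderiv ℝ f.1) :=
  (contDiff f).fderiv_right (by simp)

/-- Evaluation at a point. -/
def eval (p : E) : smoothFun E →ₐ[ℝ] ℝ := (Pi.evalAlgHom ℝ (fun _ => ℝ) p).comp (smoothFun E).val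

lemma sum_apply {ι : Type*} (s : Finset ι) (f : ι → smoothFun E) (p : E) :
    (∑ i ∈ s, f i).1 p = ∑ i ∈ s, (f i).1 p := map_sum (eval p) f s

/-- The directional derivative. -/
def dirDeriv (v : E) : Derivation ℝ (smoothFun E) (smoothFun E) :=
  Derivation.mk'
    { toFun := fun f => ⟨fun p => fderiv ℝ f.1 p v, (contDiff_fderiv f).clm_apply contDiff_const⟩
      map_add' := fun f g => Subtype.ext <| funext fun p => by
        change fderiv ℝ (f.1 + g.1) p v = fderiv ℝ f.1 p v + fderiv ℝ g.1 p v
        rw [fderiv_add (differentiable f p) (differentiable g p)]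
        rfl
      map_smul' := fun c f => Subtype.ext <| funext fun p => by
        change fderiv ℝ (c • f.1) p v = c * fderiv ℝ f.1 p v
        rw [fderiv_const_smul (differentiable f p)]
        rfl }
    fun f g => Subtype.ext <| funext fun p => by
      change fderiv ℝ (f.1 * g.1) p v = f.1 p * fderiv ℝ g.1 p v + g.1 p * fderiv ℝ f.1 p v
      rw [fderiv_mul (differentiable f p) (differentiable g p)]
      rfl

lemma dirDeriv_apply (v : E) (f : smoothFun E) (p : E) :
    (dirDeriv v f).1 p = fderiv ℝ f.1 p v := rfl

lemma dirDeriv_comm (v w : E) (f : smoothFun E) :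
    dirDeriv v (dirDeriv w f) = dirDeriv w (dirDeriv v f) := by
  ext p
  have symm : IsSymmSndFDerivAt ℝ f.1 p := (contDiff f).contDiffAt.isSymmSndFDerivAt (by
    rw [minSmoothness_of_isRCLikeNormedField]
    exact WithTop.coe_le_coe.mpr le_top)
  change fderiv ℝ (fun q => fderiv ℝ f.1 q w) p v = fderiv ℝ (fun q => fderiv ℝ f.1 q v) p w
  have hd := (contDiff_fderiv f).differentiable (by simp) p
  rw [fderiv_fderiv_apply hd, fderiv_fderiv_apply hd, symm.eq]

/-- A continuous linear functional as a smooth function. -/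
def ofCLM (L : E →L[ℝ] ℝ) : smoothFun E := ⟨L, (L.contDiff : ContDiff ℝ ∞ L)⟩

lemma dirDeriv_ofCLM (v : E) (L : E →L[ℝ] ℝ) :
    dirDeriv v (ofCLM L) = algebraMap ℝ _ (L v) := by
  ext p
  exact congrArg (· v) L.fderiv

/-- The ideal of smooth functions that vanish on `O`. -/
def vanishingIdeal (O : Set E) : Ideal (smoothFun E) where
  carrier := {f | ∀ p ∈ O, f.1 p = 0}
  zero_mem' _ _ := rfl
  add_mem' {f g} hf hg p hp := by
    change f.1 p + g.1 p = 0
    rw [hf p hp, hg p hp, add_zero]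
  smul_mem' c f hf p hp := by
    change c.1 p * f.1 p = 0
    rw [hf p hp, mul_zero]

lemma dirDeriv_mem_vanishingIdeal {O : Set E} (hO : IsOpen O) (v : E) {f : smoothFun E}
    (hf : f ∈ vanishingIdeal O) : dirDeriv v f ∈ vanishingIdeal O := fun p hp => by
  have : f.1 =ᶠ[𝓝 p] fun _ => 0 := eventually_of_mem (hO.mem_nhds hp) hf
  rw [dirDeriv_apply, this.fderiv_eq]
  simp

end smoothFun

variable {m : ℕ}

lemma eq_sum_smul_single (v : Evec m) : v = ∑ i, v i • EuclideanSpace.single i (1 : ℝ) := by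
  ext j
  simp [Finset.sum_apply, Pi.single_apply]

variable (m) in
/-- Smooth functions on `ℝ^m × ℝ^m`. -/
def smoothFrame : BivariateFrame m (smoothFun (Evec m × Evec m)) where
  d i := smoothFun.dirDeriv (EuclideanSpace.single i 1, 0)
  e i := smoothFun.dirDeriv (0, EuclideanSpace.single i 1)
  x i := smoothFun.ofCLM (EuclideanSpace.proj i ∘L ContinuousLinearMap.fst ℝ _ _)
  u i := smoothFun.ofCLM (EuclideanSpace.proj i ∘L ContinuousLinearMap.snd ℝ _ _)
  d_x i j := by rw [smoothFun.dirDeriv_ofCLM]; split_ifs <;> simp_all [eq_comm]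
  d_u i j := by rw [smoothFun.dirDeriv_ofCLM]; simp
  e_x i j := by rw [smoothFun.dirDeriv_ofCLM]; simp
  e_u i j := by rw [smoothFun.dirDeriv_ofCLM]; split_ifs <;> simp_all [eq_comm]
  d_d _ _ := smoothFun.dirDeriv_comm _ _
  e_e _ _ := smoothFun.dirDeriv_comm _ _
  e_d _ _ := smoothFun.dirDeriv_comm _ _

namespace smoothFrame

lemma d_apply (i : Fin m) (f : smoothFun (Evec m × Evec m)) (p : Evec m × Evec m) :
    ((smoothFrame m).d i f).1 p = fderiv ℝ f.1 p (EuclideanSpace.single i 1, 0) := rfl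

lemma e_apply (i : Fin m) (f : smoothFun (Evec m × Evec m)) (p : Evec m × Evec m) :
    ((smoothFrame m).e i f).1 p = fderiv ℝ f.1 p (0, EuclideanSpace.single i 1) := rfl

lemma sum_mul_d_apply (f : smoothFun (Evec m × Evec m)) (p : Evec m × Evec m) (v : Evec m) :
    ∑ i, v i * ((smoothFrame m).d i f).1 p = fderiv ℝ f.1 p (v, 0) := by
  have split : (v, (0 : Evec m)) = ∑ i, v i • (EuclideanSpace.single i (1 : ℝ), (0 : Evec m)) := by
    ext1 <;> simp [Prod.fst_sum, Prod.snd_sum, ← eq_sum_smul_single]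
  simp only [split, map_sum, map_smul, smul_eq_mul, d_apply]

lemma sum_mul_e_apply (f : smoothFun (Evec m × Evec m)) (p : Evec m × Evec m) (v : Evec m) :
    ∑ i, v i * ((smoothFrame m).e i f).1 p = fderiv ℝ f.1 p (0, v) := by
  have split : ((0 : Evec m), v) = ∑ i, v i • ((0 : Evec m), EuclideanSpace.single i (1 : ℝ)) := by
    ext1 <;> simp [Prod.fst_sum, Prod.snd_sum, ← eq_sum_smul_single]
  simp only [split, map_sum, map_smul, smul_eq_mul, e_apply]

lemma eulerX_apply (f : smoothFun (Evec m × Evec m)) (p : Evec m × Evec m) :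
    ((smoothFrame m).eulerX f).1 p = fderiv ℝ f.1 p (p.1, 0) := by
  rw [BivariateFrame.eulerX_apply, smoothFun.sum_apply, ← sum_mul_d_apply]
  rfl

lemma eulerU_apply (f : smoothFun (Evec m × Evec m)) (p : Evec m × Evec m) :
    ((smoothFrame m).eulerU f).1 p = fderiv ℝ f.1 p (0, p.2) := by
  rw [BivariateFrame.eulerU_apply, smoothFun.sum_apply, ← sum_mul_e_apply]
  rfl

lemma rho_apply (p : Evec m × Evec m) : (smoothFrame m).rho.1 p = ‖p.1‖ ^ 2 := by
  rw [BivariateFrame.rho, smoothFun.sum_apply, EuclideanSpace.real_norm_sq_eq]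
  exact Finset.sum_congr rfl fun i _ => (sq (p.1 i)).symm

lemma ell_apply (p : Evec m × Evec m) : (smoothFrame m).ell.1 p = ⟪p.1, p.2⟫ := by
  rw [BivariateFrame.ell, smoothFun.sum_apply, PiLp.inner_apply]
  exact Finset.sum_congr rfl fun i _ => mul_comm (p.1 i) (p.2 i)

lemma sigma_apply (p : Evec m × Evec m) : (smoothFrame m).sigma.1 p = ‖p.2‖ ^ 2 := by
  rw [BivariateFrame.sigma, smoothFun.sum_apply, EuclideanSpace.real_norm_sq_eq]
  exact Finset.sum_congr rfl fun i _ => (sq (p.2 i)).symm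

/-- The substitution `f(x, u) ↦ f(x, w(x, u))`. -/
def fiberSubst (w : Fin m → smoothFun (Evec m × Evec m)) :
    smoothFun (Evec m × Evec m) →ₐ[ℝ] smoothFun (Evec m × Evec m) where
  toFun f := ⟨fun p => f.1 (p.1, WithLp.toLp 2 fun i => (w i).1 p),
    (smoothFun.contDiff f).comp (contDiff_fst.prodMk
      (contDiff_euclidean.mpr fun i => smoothFun.contDiff (w i)))⟩
  map_one' := rfl
  map_mul' _ _ := rfl
  map_zero' := rfl
  map_add' _ _ := rfl
  commutes' _ := rfl

lemma fiberSubst_apply (w : Fin m → smoothFun (Evec m × Evec m))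
    (f : smoothFun (Evec m × Evec m)) (p : Evec m × Evec m) :
    (fiberSubst w f).1 p = f.1 (p.1, WithLp.toLp 2 fun i => (w i).1 p) := rfl

lemma fiberSubst_u (w : Fin m → smoothFun (Evec m × Evec m)) (i : Fin m) :
    fiberSubst w ((smoothFrame m).u i) = w i := rfl

lemma fderiv_fiberSubst (w : Fin m → smoothFun (Evec m × Evec m))
    (f : smoothFun (Evec m × Evec m)) (p v : Evec m × Evec m) :
    fderiv ℝ (fiberSubst w f).1 p v = fderiv ℝ f.1 (p.1, WithLp.toLp 2 fun i => (w i).1 p)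
      (v.1, 0) + ∑ j, fderiv ℝ (w j).1 p v * (fiberSubst w ((smoothFrame m).e j f)).1 p := by
  have hw := (PiLp.hasFDerivAt_toLp (𝕜 := ℝ) 2 _).comp p
    (hasFDerivAt_pi.mpr fun i => (smoothFun.differentiable (w i) p).hasFDerivAt)
  have hcomp := (smoothFun.differentiable f _).hasFDerivAt.comp p (hasFDerivAt_fst.prodMk hw)
  refine (congrArg (· v) hcomp.fderiv).trans ?_
  simp only [fiberSubst_apply]
  rw [show (∑ j, fderiv ℝ (w j).1 p v * _ : ℝ) = _ from
    sum_mul_e_apply f _ (WithLp.toLp 2 fun j => fderiv ℝ (w j).1 p v), ← map_add]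
  simp

lemma isFiberSubst_fiberSubst (w : Fin m → smoothFun (Evec m × Evec m)) :
    (smoothFrame m).IsFiberSubst (fiberSubst w) where
  map_x _ := rfl
  d_map i f := by
    ext p
    refine (fderiv_fiberSubst w f p _).trans (congrArg _ ?_)
    exact (smoothFun.sum_apply _ (fun j => (smoothFrame m).d i (w j) * _) p).symm
  e_map i f := by
    ext p
    refine (fderiv_fiberSubst w f p _).trans ?_
    rw [Prod.mk_zero_zero, map_zero, zero_add]
    exact (smoothFun.sum_apply _ (fun j => (smoothFrame m).e i (w j) * _) p).symm

end smoothFrame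

end SmoothFunctions

section EulerDerivative

/-- `h` is differentiable with `t h'(t) = e(t)`. -/
def HasEulerDeriv (h e : ℝ → ℝ) : Prop := ∀ t, ∃ h', HasDerivAt h h' t ∧ t * h' = e t

lemma HasEulerDeriv.pow_mul_eq {h e : ℝ → ℝ} (hd : HasEulerDeriv h e) (c : ℕ) {ρ : ℝ}
    (heq : ∀ t ∈ Set.Ioo 0 ρ, e t + c * h t = 0) {t : ℝ} (ht : t ∈ Set.Ico 0 ρ) :
    t ^ c * h t = 0 ^ c * h 0 := by
  choose h' hh' he using hd
  have hderiv (s : ℝ) : HasDerivAt (fun s => s ^ c * h s)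
      (c * s ^ (c - 1) * h s + s ^ c * h' s) s := (hasDerivAt_pow c s).mul (hh' s)
  obtain rfl | hpos := ht.1.eq_or_lt
  · rfl
  obtain ⟨s, hs, hslope⟩ := exists_hasDerivAt_eq_slope _ _ hpos
    (fun s _ => (hderiv s).continuousAt.continuousWithinAt) fun s _ => hderiv s
  have hzero : c * s ^ (c - 1) * h s + s ^ c * h' s = 0 := by
    have hmul : s * (c * s ^ (c - 1) * h s + s ^ c * h' s) = 0 := by
      have hpow : (c : ℝ) * (s * s ^ (c - 1)) = c * s ^ c := by
        cases c <;> simp [pow_succ']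
      linear_combination h s * hpow + s ^ c * he s + s ^ c * heq s ⟨hs.1, hs.2.trans ht.2⟩
    exact (mul_eq_zero.mp hmul).resolve_left hs.1.ne'
  rw [hzero, eq_comm, div_eq_zero_iff, or_iff_left (by linarith), sub_eq_zero] at hslope
  exact hslope

lemma HasEulerDeriv.eq_zero {h e : ℝ → ℝ} (hd : HasEulerDeriv h e) {c : ℕ} (hc : c ≠ 0) {ρ : ℝ}
    (heq : ∀ t ∈ Set.Ioo 0 ρ, e t + c * h t = 0) {t : ℝ} (ht : t ∈ Set.Ioo 0 ρ) : h t = 0 := by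
  have h0 := hd.pow_mul_eq c heq (Set.Ioo_subset_Ico_self ht)
  rw [zero_pow hc, zero_mul] at h0
  exact (mul_eq_zero.mp h0).resolve_left (pow_pos ht.1 c).ne'

lemma HasEulerDeriv.eq_pow_mul {h e : ℝ → ℝ} (hd : HasEulerDeriv h e) {k : ℕ}
    (heq : ∀ t, e t = k * h t) {t : ℝ} (ht : 0 < t) : h t = t ^ k * h 1 := by
  choose h' hh' he using hd
  have hderiv (s : ℝ) : HasDerivAt (fun s => Real.exp (-(k * s)) * h (Real.exp s)) 0 s := by
    have h1 := (((hasDerivAt_id s).const_mul (k : ℝ)).neg.exp).mul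
      ((hh' (Real.exp s)).comp s (Real.hasDerivAt_exp s))
    refine h1.congr_deriv ?_
    simp only [id, Function.comp]
    linear_combination Real.exp (-(k * s)) * (he (Real.exp s) + heq (Real.exp s))
  have hconst := is_const_of_deriv_eq_zero (fun s => (hderiv s).differentiableAt)
    (fun s => (hderiv s).deriv) (Real.log t) 0
  simp only [Real.exp_log ht, Real.exp_neg, Real.exp_nat_mul, mul_zero, Real.exp_zero] at hconst
  rw [inv_one, one_mul, inv_mul_eq_iff_eq_mul₀ (pow_pos ht k).ne'] at hconst
  exact hconst

end EulerDerivative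

section SphereMeasure

open scoped Pointwise ContDiff

variable {m : ℕ}

instance isFiniteMeasure_sphereM (m : ℕ) : IsFiniteMeasure (sphereM m) := by
  unfold sphereM
  infer_instance

lemma ae_norm_eq_one (m : ℕ) : ∀ᵐ ζ ∂(sphereM m), ‖ζ‖ = 1 := by
  unfold sphereM
  rw [ae_map_iff measurable_subtype_coe.aemeasurable
    (measurableSet_eq_fun measurable_norm measurable_const)]
  exact Eventually.of_forall fun ζ => by simp

lemma sphereM_apply (m : ℕ) {s : Set (Evec m)} (hs : MeasurableSet s) :
    sphereM m s = m * volume (Set.Ioo (0 : ℝ) 1 • (s ∩ sphere (0 : Evec m) 1)) := by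
  rw [sphereM, Measure.map_apply measurable_subtype_coe hs,
    Measure.toSphere_apply' _ (measurable_subtype_coe hs), Subtype.image_preimage_coe,
    Set.inter_comm, finrank_euclideanSpace_fin]

lemma preimage_Ioo_smul_inter_sphere (A : Evec m ≃ₗᵢ[ℝ] Evec m) (s : Set (Evec m)) :
    A ⁻¹' (Set.Ioo (0 : ℝ) 1 • (s ∩ sphere (0 : Evec m) 1)) =
      Set.Ioo (0 : ℝ) 1 • (A ⁻¹' s ∩ sphere (0 : Evec m) 1) := by
  ext x
  simp only [Set.mem_smul, Set.mem_preimage, Set.mem_inter_iff, mem_sphere_zero_iff_norm]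
  constructor
  · rintro ⟨c, hc, y, ⟨hy, hy1⟩, h⟩
    refine ⟨c, hc, A.symm y, ⟨by simpa using hy, by simpa using hy1⟩, ?_⟩
    rw [← map_smul, h, A.symm_apply_apply]
  · rintro ⟨c, hc, y, ⟨hy, hy1⟩, rfl⟩
    exact ⟨c, hc, A y, ⟨hy, by simpa using hy1⟩, (map_smul A c y).symm⟩

lemma measurePreserving_sphereM (A : Evec m ≃ₗᵢ[ℝ] Evec m) :
    MeasurePreserving A (sphereM m) (sphereM m) := by
  refine ⟨A.continuous.measurable, Measure.ext fun s hs => ?_⟩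
  have hA := A.continuous.measurable
  rw [Measure.map_apply hA hs, sphereM_apply m hs, sphereM_apply m (hA hs),
    ← preimage_Ioo_smul_inter_sphere A]
  exact congrArg _ (A.measurePreserving.measure_preimage_equiv (f := A.toMeasurableEquiv) _)

lemma integral_sphereM_comp (A : Evec m ≃ₗᵢ[ℝ] Evec m) (g : Evec m → ℝ) :
    ∫ ζ, g (A ζ) ∂(sphereM m) = ∫ ζ, g ζ ∂(sphereM m) :=
  (measurePreserving_sphereM A).integral_comp A.toMeasurableEquiv.measurableEmbedding g

lemma restrict_sphere_sphereM (m : ℕ) : (sphereM m).restrict (sphere 0 1) = sphereM m :=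
  Measure.restrict_eq_self_of_ae_mem ((ae_norm_eq_one m).mono fun _ => mem_sphere_zero_iff_norm.mpr)

lemma integrable_sphereM {g : Evec m → ℝ} (hg : ContinuousOn g (sphere 0 1)) :
    Integrable g (sphereM m) := by
  obtain ⟨C, hC⟩ := (isCompact_sphere (0 : Evec m) 1).exists_bound_of_continuousOn hg
  refine Integrable.of_bound (restrict_sphere_sphereM m ▸
    hg.aestronglyMeasurable isClosed_sphere.measurableSet) C ?_
  filter_upwards [ae_norm_eq_one m] with ζ hζ
  exact hC ζ (by simpa using hζ)

lemma integral_sphereM_congr {g h : Evec m → ℝ} (hgh : ∀ ζ : Evec m, ‖ζ‖ = 1 → g ζ = h ζ) :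
    ∫ ζ, g ζ ∂(sphereM m) = ∫ ζ, h ζ ∂(sphereM m) :=
  integral_congr_ae ((ae_norm_eq_one m).mono hgh)

lemma integral_sphereM_const (c : ℝ) : ∫ _, c ∂(sphereM m) = omegaS m * c := by
  rw [integral_const, smul_eq_mul, omegaS, Measure.real]

lemma omegaS_pos (hm : 0 < m) : 0 < omegaS m := by
  have : Nonempty (Fin m) := ⟨⟨0, hm⟩⟩
  refine ENNReal.toReal_pos ?_ (measure_ne_top _ _)
  rw [sphereM, Measure.map_apply measurable_subtype_coe MeasurableSet.univ, Set.preimage_univ]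
  exact fun h => Measure.toSphere_ne_zero (volume : Measure (Evec m))
    (Measure.measure_univ_eq_zero.mp h)

lemma hasDerivAt_integral_sphereM {G G' : ℝ → Evec m → ℝ} (hG : ∀ s, Continuous (G s))
    (hG' : Continuous (fun z : ℝ × Evec m => G' z.1 z.2))
    (h : ∀ s ζ, HasDerivAt (fun s => G s ζ) (G' s ζ) s) (s : ℝ) :
    HasDerivAt (fun s => ∫ ζ, G s ζ ∂(sphereM m)) (∫ ζ, G' s ζ ∂(sphereM m)) s := by
  obtain ⟨C, hC⟩ := ((isCompact_closedBall s 1).prod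
    (isCompact_sphere (0 : Evec m) 1)).exists_bound_of_continuousOn hG'.continuousOn
  refine (hasDerivAt_integral_of_dominated_loc_of_deriv_le (bound := fun _ => C)
    (closedBall_mem_nhds s one_pos)
    (Eventually.of_forall fun s => (hG s).aestronglyMeasurable)
    (integrable_sphereM (hG s).continuousOn)
    (hG'.comp (Continuous.prodMk_right s)).aestronglyMeasurable ?_ (integrable_const C) ?_).2
  · filter_upwards [ae_norm_eq_one m] with ζ hζ t ht
    exact hC (t, ζ) ⟨ht, by simpa using hζ⟩
  · exact Eventually.of_forall fun ζ t _ => h t ζ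

lemma integral_fderiv_isometry_path_eq_zero {f : Evec m → ℝ} (hf : ContDiff ℝ 1 f)
    {A : ℝ → Evec m ≃ₗᵢ[ℝ] Evec m} {A' : ℝ → Evec m → Evec m}
    (hA : Continuous fun z : ℝ × Evec m => A z.1 z.2)
    (hA' : Continuous fun z : ℝ × Evec m => A' z.1 z.2)
    (h : ∀ s ζ, HasDerivAt (fun s => A s ζ) (A' s ζ) s) (s : ℝ) :
    ∫ ζ, fderiv ℝ f (A s ζ) (A' s ζ) ∂(sphereM m) = 0 := by
  have hderiv := hasDerivAt_integral_sphereM (G := fun s ζ => f (A s ζ))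
    (fun s => hf.continuous.comp (A s).continuous)
    (((hf.continuous_fderiv one_ne_zero).comp hA).clm_apply hA')
    (fun s ζ => (hf.differentiable one_ne_zero _).hasFDerivAt.comp_hasDerivAt s (h s ζ)) s
  simp only [integral_sphereM_comp] at hderiv
  exact hderiv.unique (hasDerivAt_const s _)

lemma reflection_singleton_of_norm_eq_one {v : Evec m} (hv : ‖v‖ = 1) (ζ : Evec m) :
    (ℝ ∙ v).reflection ζ = (2 * ⟪v, ζ⟫) • v - ζ := by
  rw [Submodule.reflection_singleton_apply, hv, two_smul, ← add_smul]
  simp [two_mul]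

lemma hasDerivAt_reflection_singleton {v : ℝ → Evec m} {v' : Evec m} {s : ℝ}
    (hv : HasDerivAt v v' s) (hnorm : ∀ s, ‖v s‖ = 1) (ζ : Evec m) :
    HasDerivAt (fun s => (ℝ ∙ v s).reflection ζ)
      ((2 * ⟪v s, ζ⟫) • v' + (2 * ⟪v', ζ⟫) • v s) s := by
  simp only [reflection_singleton_of_norm_eq_one (hnorm _)]
  have h := ((hv.inner ℝ (hasDerivAt_const s ζ)).const_mul 2).smul hv
  simpa using h.sub_const ζ

/- The isometries are the reflections in the lines spanned by `cos s • a + sin s • b`; the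
reflection at `s = 0` is then undone by a change of variables. -/
lemma integral_fderiv_inner_smul_comm {f : Evec m → ℝ} (hf : ContDiff ℝ 1 f) {a b : Evec m}
    (ha : ‖a‖ = 1) (hb : ‖b‖ = 1) (hab : ⟪a, b⟫ = 0) :
    ∫ ζ, fderiv ℝ f ζ (⟪a, ζ⟫ • b) ∂(sphereM m) = ∫ ζ, fderiv ℝ f ζ (⟪b, ζ⟫ • a) ∂(sphereM m) := by
  set v : ℝ → Evec m := fun s => Real.cos s • a + Real.sin s • b with hv
  set v' : ℝ → Evec m := fun s => -Real.sin s • a + Real.cos s • b with hv'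
  have hderiv (s : ℝ) : HasDerivAt v (v' s) s :=
    ((Real.hasDerivAt_cos s).smul_const a).add ((Real.hasDerivAt_sin s).smul_const b)
  have hnorm (s : ℝ) : ‖v s‖ = 1 := by
    have hsq : ‖v s‖ ^ 2 = 1 := by
      simp [hv, norm_add_sq_real, norm_smul, ha, hb, hab, inner_smul_left, inner_smul_right]
    exact (pow_eq_one_iff_of_nonneg (norm_nonneg _) two_ne_zero).mp hsq
  have hrefl (s : ℝ) := reflection_singleton_of_norm_eq_one (hnorm s)
  have hzero := integral_fderiv_isometry_path_eq_zero hf (by simp only [hrefl]; fun_prop)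
    (by fun_prop) (fun s => hasDerivAt_reflection_singleton (hderiv s) hnorm) 0
  have hv0 : v 0 = a := by simp [hv]
  have hv'0 : v' 0 = b := by simp [hv']
  rw [← integral_sphereM_comp (ℝ ∙ v 0).reflection] at hzero
  simp only [Submodule.reflection_reflection, hv0, hv'0] at hzero
  have hinner_a (ζ : Evec m) : ⟪a, (ℝ ∙ a).reflection ζ⟫ = ⟪a, ζ⟫ := by
    rw [← hv0, hrefl, inner_sub_right, inner_smul_right, real_inner_self_eq_norm_sq, hnorm]
    ring
  have hinner_b (ζ : Evec m) : ⟪b, (ℝ ∙ a).reflection ζ⟫ = -⟪b, ζ⟫ := by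
    rw [← hv0, hrefl, inner_sub_right, inner_smul_right, hv0, real_inner_comm a b, hab]
    ring
  have hint {c d : Evec m} : Integrable (fun ζ => fderiv ℝ f ζ (⟪c, ζ⟫ • d)) (sphereM m) :=
    integrable_sphereM ((hf.continuous_fderiv one_ne_zero).clm_apply (by fun_prop)).continuousOn
  rw [← sub_eq_zero, ← integral_sub hint hint, ← mul_eq_zero_iff_left two_ne_zero,
    ← integral_const_mul, ← hzero]
  refine integral_congr_ae (Eventually.of_forall fun ζ => ?_)
  simp only [map_smul, map_add, smul_eq_mul, hinner_a, hinner_b]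
  ring

lemma integral_fderiv_single_comm {f : Evec m → ℝ} (hf : ContDiff ℝ 1 f) (i j : Fin m) :
    ∫ ζ, ζ j * fderiv ℝ f ζ (EuclideanSpace.single i 1) ∂(sphereM m) =
      ∫ ζ, ζ i * fderiv ℝ f ζ (EuclideanSpace.single j 1) ∂(sphereM m) := by
  obtain rfl | hij := eq_or_ne i j
  · rfl
  · have hinner : ⟪(EuclideanSpace.single j 1 : Evec m), EuclideanSpace.single i 1⟫ = 0 := by
      simp [EuclideanSpace.inner_single_left, hij.symm]
    have h := integral_fderiv_inner_smul_comm hf (by simp) (by simp) hinner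
    simpa [EuclideanSpace.inner_single_left] using h

end SphereMeasure

section SphereMean

variable {m : ℕ}

/-- The integral of `ζ ↦ f(tζ, g(ζ))` over the unit sphere. -/
def sphereMean (g : C(Evec m, Evec m)) (t : ℝ) : smoothFun (Evec m × Evec m) →ₗ[ℝ] ℝ where
  toFun f := ∫ ζ, f.1 (t • ζ, g ζ) ∂(sphereM m)
  map_add' f h := integral_add
    (integrable_sphereM ((smoothFun.continuous f).comp (by fun_prop)).continuousOn)
    (integrable_sphereM ((smoothFun.continuous h).comp (by fun_prop)).continuousOn)
  map_smul' c f := integral_const_mul c _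

lemma sphereMean_apply (g : C(Evec m, Evec m)) (t : ℝ) (f : smoothFun (Evec m × Evec m)) :
    sphereMean g t f = ∫ ζ, f.1 (t • ζ, g ζ) ∂(sphereM m) := rfl

lemma hasEulerDeriv_sphereMean (g : C(Evec m, Evec m)) (f : smoothFun (Evec m × Evec m)) :
    HasEulerDeriv (fun t => sphereMean g t f)
      (fun t => sphereMean g t ((smoothFrame m).eulerX f)) := fun t => by
  have hpath (s : ℝ) (ζ : Evec m) : HasDerivAt (fun s : ℝ => (s • ζ, g ζ)) (ζ, 0) s := by
    simpa using ((hasDerivAt_id s).smul_const ζ).prodMk (hasDerivAt_const s (g ζ))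
  refine ⟨_, hasDerivAt_integral_sphereM
    (fun s => (smoothFun.continuous f).comp (by fun_prop))
    (((smoothFun.contDiff_fderiv f).continuous.comp
      (by fun_prop : Continuous fun z : ℝ × Evec m => (z.1 • z.2, g z.2))).clm_apply
        (by fun_prop : Continuous fun z : ℝ × Evec m => (z.2, (0 : Evec m))))
    (fun s ζ => (smoothFun.differentiable f _).hasFDerivAt.comp_hasDerivAt s (hpath s ζ)) t, ?_⟩
  rw [← integral_const_mul]
  refine integral_congr_ae (Eventually.of_forall fun ζ => ?_)
  change t * fderiv ℝ f.1 (t • ζ, g ζ) (ζ, 0) = ((smoothFrame m).eulerX f).1 (t • ζ, g ζ)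
  rw [smoothFrame.eulerX_apply, ← smul_eq_mul, ← map_smul, Prod.smul_mk, smul_zero]

lemma isSphereFunctional_sphereMean_const (t : ℝ) (u : Evec m) :
    (smoothFrame m).IsSphereFunctional (sphereMean (.const _ u) t) (t ^ 2) where
  map_rho_mul f := by
    simp only [sphereMean_apply, ← integral_const_mul]
    refine integral_sphereM_congr fun ζ hζ => ?_
    change (smoothFrame m).rho.1 (t • ζ, u) * f.1 (t • ζ, u) = t ^ 2 * f.1 (t • ζ, u)
    rw [smoothFrame.rho_apply, norm_smul, hζ, mul_one, Real.norm_eq_abs, sq_abs]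
  map_rotation i j f := by
    have hcomp : ContDiff ℝ 1 fun ζ : Evec m => f.1 (t • ζ, u) :=
      ((smoothFun.contDiff f).of_le (by simp)).comp (by fun_prop)
    have hfderiv (ζ : Evec m) (l : Fin m) :
        fderiv ℝ (fun ζ : Evec m => f.1 (t • ζ, u)) ζ (EuclideanSpace.single l 1) =
          t * ((smoothFrame m).d l f).1 (t • ζ, u) := by
      have hpath : HasFDerivAt (fun ζ : Evec m => (t • ζ, u))
          ((t • ContinuousLinearMap.id ℝ (Evec m)).prod 0) ζ :=
        ((hasFDerivAt_id ζ).const_smul t).prodMk (hasFDerivAt_const u ζ)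
      refine (congrArg (· (EuclideanSpace.single l 1))
        ((smoothFun.differentiable f _).hasFDerivAt.comp ζ hpath).fderiv).trans ?_
      rw [smoothFrame.d_apply, ← smul_eq_mul, ← map_smul]
      simp
    have h := integral_fderiv_single_comm hcomp i j
    simp only [hfderiv, mul_left_comm _ t, ← mul_assoc] at h
    exact h

end SphereMean

section Homogeneity

variable {m : ℕ}

lemma hasEulerDeriv_smul_right (f : smoothFun (Evec m × Evec m)) (x u : Evec m) :
    HasEulerDeriv (fun t => f.1 (x, t • u)) (fun t => ((smoothFrame m).eulerU f).1 (x, t • u)) := by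
  intro t
  have hpath : HasDerivAt (fun t : ℝ => (x, t • u)) (0, u) t := by
    simpa using (hasDerivAt_const t x).prodMk ((hasDerivAt_id t).smul_const u)
  refine ⟨_, (smoothFun.differentiable f _).hasFDerivAt.comp_hasDerivAt t hpath, ?_⟩
  change t * _ = ((smoothFrame m).eulerU f).1 (x, t • u)
  rw [smoothFrame.eulerU_apply, ← smul_eq_mul, ← map_smul, Prod.smul_mk, smul_zero]

namespace smoothFrame

lemma apply_smul_right {f : smoothFun (Evec m × Evec m)} {k : ℕ}
    (hU : (smoothFrame m).eulerU f = k * f) (x u : Evec m) {t : ℝ} (ht : 0 < t) :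
    f.1 (x, t • u) = t ^ k * f.1 (x, u) := by
  have h := (hasEulerDeriv_smul_right f x u).eq_pow_mul (k := k) (fun s => by rw [hU]; rfl) ht
  rwa [one_smul] at h

lemma eq_zero_of_eulerU_eq_neg {f : smoothFun (Evec m × Evec m)}
    (hf : (smoothFrame m).eulerU f = -f) : f = 0 := by
  ext ⟨x, u⟩
  have h := (hasEulerDeriv_smul_right f x u).eq_zero one_ne_zero (ρ := 2)
    (fun t _ => by simp [hf]) (t := 1) (by norm_num)
  rwa [one_smul] at h

/-- The fiber substitution `f(x, u) ↦ f(x, |x|² u - 2⟨x, u⟩ x)`. -/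
def reflSubst (m : ℕ) : smoothFun (Evec m × Evec m) →ₐ[ℝ] smoothFun (Evec m × Evec m) :=
  fiberSubst fun i => (smoothFrame m).rho * (smoothFrame m).u i
    - 2 * (smoothFrame m).ell * (smoothFrame m).x i

lemma isReflTwist_reflSubst : (smoothFrame m).IsReflTwist (reflSubst m) where
  toIsFiberSubst := isFiberSubst_fiberSubst _
  map_u i := fiberSubst_u _ i

lemma reflSubst_apply (f : smoothFun (Evec m × Evec m)) (x u : Evec m) :
    (reflSubst m f).1 (x, u) = f.1 (x, ‖x‖ ^ 2 • u - (2 * ⟪x, u⟫) • x) := by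
  refine congrArg (fun w => f.1 (x, w)) (PiLp.ext fun i => ?_)
  change (smoothFrame m).rho.1 (x, u) * u i - 2 * (smoothFrame m).ell.1 (x, u) * x i = _
  rw [rho_apply, ell_apply]
  rfl

/-- The fiber substitution `f(x, u) ↦ f(x, u - ⟨x, u⟩ x)`. -/
def shearSubst (m : ℕ) : smoothFun (Evec m × Evec m) →ₐ[ℝ] smoothFun (Evec m × Evec m) :=
  fiberSubst fun i => (smoothFrame m).u i - (smoothFrame m).ell * (smoothFrame m).x i

lemma isShear_shearSubst : (smoothFrame m).IsShear (shearSubst m) where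
  toIsFiberSubst := isFiberSubst_fiberSubst _
  map_u i := fiberSubst_u _ i

lemma shearSubst_apply (f : smoothFun (Evec m × Evec m)) (x u : Evec m) :
    (shearSubst m f).1 (x, u) = f.1 (x, u - ⟪x, u⟫ • x) := by
  refine congrArg (fun w => f.1 (x, w)) (PiLp.ext fun i => ?_)
  change u i - (smoothFrame m).ell.1 (x, u) * x i = _
  rw [ell_apply]
  rfl

/-- The function `(x, u) ↦ f(0, u)`. -/
def freeze (m : ℕ) : smoothFun (Evec m × Evec m) →ₐ[ℝ] smoothFun (Evec m × Evec m) where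
  toFun f := ⟨fun p => f.1 (0, p.2), (smoothFun.contDiff f).comp (by fun_prop)⟩
  map_one' := rfl
  map_mul' _ _ := rfl
  map_zero' := rfl
  map_add' _ _ := rfl
  commutes' _ := rfl

lemma fderiv_freeze (f : smoothFun (Evec m × Evec m)) (p v : Evec m × Evec m) :
    fderiv ℝ (freeze m f).1 p v = fderiv ℝ f.1 (0, p.2) (0, v.2) := by
  have hpath : HasFDerivAt (fun p : Evec m × Evec m => ((0 : Evec m), p.2))
      ((0 : Evec m × Evec m →L[ℝ] Evec m).prod (ContinuousLinearMap.snd ℝ _ _)) p :=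
    (hasFDerivAt_const _ p).prodMk hasFDerivAt_snd
  exact congrArg (· v) ((smoothFun.differentiable f _).hasFDerivAt.comp p hpath).fderiv

lemma d_freeze (i : Fin m) (f : smoothFun (Evec m × Evec m)) :
    (smoothFrame m).d i (freeze m f) = 0 := by
  ext p
  rw [d_apply, fderiv_freeze, Prod.mk_zero_zero, map_zero]
  rfl

lemma e_freeze (i : Fin m) (f : smoothFun (Evec m × Evec m)) :
    (smoothFrame m).e i (freeze m f) = freeze m ((smoothFrame m).e i f) := by
  ext p
  rw [e_apply, fderiv_freeze]
  rfl

lemma eulerU_freeze (f : smoothFun (Evec m × Evec m)) :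
    (smoothFrame m).eulerU (freeze m f) = freeze m ((smoothFrame m).eulerU f) := by
  simp only [BivariateFrame.eulerU_apply, e_freeze, map_sum, map_mul]
  rfl

lemma lapU_freeze (f : smoothFun (Evec m × Evec m)) :
    (smoothFrame m).lapU (freeze m f) = freeze m ((smoothFrame m).lapU f) := by
  simp only [BivariateFrame.lapU_apply, e_freeze, map_sum]

end smoothFrame

end Homogeneity

section SmoothMeanValue

variable {m : ℕ}

/-- The vector field `ζ ↦ u - 2⟨ζ, u⟩ζ`, whose values on the unit sphere are the reflections
`R_ζ(u)`. -/
def reflField (u : Evec m) : C(Evec m, Evec m) where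
  toFun ζ := u - (2 * ⟪ζ, u⟫) • ζ
  continuous_toFun := by fun_prop

lemma smoothFrame.sphereMean_reflSubst {f : smoothFun (Evec m × Evec m)} {k : ℕ}
    (hU : (smoothFrame m).eulerU f = k * f) (u : Evec m) {t : ℝ} (ht : 0 < t) :
    sphereMean (.const _ u) t (reflSubst m f) = t ^ (2 * k) * sphereMean (reflField u) t f := by
  simp only [sphereMean_apply, ← integral_const_mul]
  refine integral_sphereM_congr fun ζ hζ => ?_
  rw [pow_mul, ← apply_smul_right hU _ _ (pow_pos ht 2)]
  change (reflSubst m f).1 (t • ζ, u) = f.1 (t • ζ, t ^ 2 • (u - (2 * ⟪ζ, u⟫) • ζ))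
  rw [reflSubst_apply, norm_smul, hζ, real_inner_smul_left, Real.norm_of_nonneg ht.le,
    mul_one]
  exact congrArg (fun w => f.1 (t • ζ, w)) (by module)

lemma sphereMean_eq_zero_of_radialFactor (hm : 2 < m) (g : C(Evec m, Evec m)) {ρ : ℝ} {n : ℕ}
    (hn : n ≠ 0) {f : smoothFun (Evec m × Evec m)}
    (h : ∀ t ∈ Set.Ioo 0 ρ, sphereMean g t ((smoothFrame m).radialFactor n f) = 0) {t : ℝ}
    (ht : t ∈ Set.Ioo 0 ρ) : sphereMean g t f = 0 := by
  have hinner (s : ℝ) (hs : s ∈ Set.Ioo 0 ρ) :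
      sphereMean g s ((smoothFrame m).eulerX f + (2 * n : ℝ) • f) = 0 := by
    refine (hasEulerDeriv_sphereMean g _).eq_zero (c := 2 * n + (m - 2)) (by omega)
      (fun s hs => ?_) hs
    rw [← h s hs, BivariateFrame.radialFactor]
    push_cast [Nat.cast_sub hm.le]
    simp only [map_add, map_smul, Derivation.map_smul, smul_eq_mul]
    ring
  refine (hasEulerDeriv_sphereMean g f).eq_zero (c := 2 * n) (by omega) (fun s hs => ?_) ht
  rw [← hinner s hs, map_add, map_smul, smul_eq_mul]
  push_cast
  rfl

lemma sphereMean_kelvinLap_pow_radialFactor {k n : ℕ} (u : Evec m) {f : smoothFun (Evec m × Evec m)}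
    (hU : (smoothFrame m).eulerU f = k * f) {t : ℝ} (ht : 0 < t)
    (h : sphereMean (.const _ u) t
      (((smoothFrame m).kelvinLap k ^ (n + 1)) (smoothFrame.reflSubst m f)) = 0) :
    sphereMean (.const _ u) t (((smoothFrame m).kelvinLap k ^ n)
      (smoothFrame.reflSubst m ((smoothFrame m).radialFactor n f))) = 0 := by
  rw [(isSphereFunctional_sphereMean_const t u).map_kelvinLap_pow_succ
    smoothFrame.isReflTwist_reflSubst hU] at h
  exact (mul_eq_zero.mp h).resolve_left (pow_pos ht 2).ne'

lemma sphereMean_eulerX_eq_zero_of_kelvinLap_pow (hm : 2 < m) {k : ℕ} (u : Evec m) {ρ : ℝ}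
    (n : ℕ) {f : smoothFun (Evec m × Evec m)} (hU : (smoothFrame m).eulerU f = k * f)
    (h : ∀ t ∈ Set.Ioo 0 ρ, sphereMean (.const _ u) t
      (((smoothFrame m).kelvinLap k ^ (n + 1)) (smoothFrame.reflSubst m f)) = 0) {t : ℝ}
    (ht : t ∈ Set.Ioo 0 ρ) : sphereMean (reflField u) t ((smoothFrame m).eulerX f) = 0 := by
  induction n generalizing f t with
  | zero =>
    refine (hasEulerDeriv_sphereMean (reflField u) _).eq_zero (c := m - 2) (by omega)
      (fun s hs => ?_) ht
    have hzero := sphereMean_kelvinLap_pow_radialFactor u hU hs.1 (h s hs)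
    rw [pow_zero, Module.End.one_apply, smoothFrame.sphereMean_reflSubst
      (BivariateFrame.eulerU_radialFactor_eq hU 0) u hs.1] at hzero
    rw [← (mul_eq_zero.mp hzero).resolve_left (pow_pos hs.1 _).ne', BivariateFrame.radialFactor]
    simp [Nat.cast_sub hm.le]
  | succ n ih =>
    refine sphereMean_eq_zero_of_radialFactor hm (reflField u) n.succ_ne_zero (fun s hs => ?_) ht
    rw [← BivariateFrame.eulerX_radialFactor]
    exact ih (BivariateFrame.eulerU_radialFactor_eq hU _)
      (fun r hr => sphereMean_kelvinLap_pow_radialFactor u hU hr.1 (h r hr)) hs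

lemma sphereMean_reflField_eq_sphereMean_zero (hm : 3 ≤ m) (hm4 : m ≠ 4) {k : ℕ}
    {f : smoothFun (Evec m × Evec m)} (hU : (smoothFrame m).eulerU f = k * f)
    (hf : (smoothFrame m).lapU f = 0) {ρ : ℝ}
    (hB : ∀ x ∈ ball 0 ρ, ∀ u, ((smoothFrame m).bosonicLap k f).1 (x, u) = 0) (u : Evec m) {t : ℝ}
    (ht : t ∈ Set.Ico 0 ρ) : sphereMean (reflField u) t f = sphereMean (reflField u) 0 f := by
  have hopen : IsOpen (ball (0 : Evec m) ρ ×ˢ (Set.univ : Set (Evec m))) :=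
    isOpen_ball.prod isOpen_univ
  have hpow := smoothFrame.isReflTwist_reflSubst.kelvinLap_pow_mem hm hm4
    (fun g => smoothFrame.eq_zero_of_eulerU_eq_neg)
    (W := smoothFun.vanishingIdeal (ball 0 ρ ×ˢ Set.univ))
    (fun _ _ => smoothFun.dirDeriv_mem_vanishingIdeal hopen _)
    (fun _ _ => smoothFun.dirDeriv_mem_vanishingIdeal hopen _) hU hf fun p hp => ?_
  · have hconst := (hasEulerDeriv_sphereMean (reflField u) f).pow_mul_eq 0 (fun s hs => ?_) ht
    · simpa using hconst
    rw [sphereMean_eulerX_eq_zero_of_kelvinLap_pow hm u k hU (fun r hr => ?_) hs]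
    · simp
    refine (integral_sphereM_congr fun ζ hζ => hpow _ ⟨?_, trivial⟩).trans (integral_zero _ _)
    rw [mem_ball_zero_iff, norm_smul, hζ, mul_one, Real.norm_of_nonneg hr.1.le]
    exact hr.2
  · exact (smoothFrame.reflSubst_apply _ p.1 p.2).trans (hB p.1 hp.1 _)

end SmoothMeanValue

section ShearValue

variable {m : ℕ}

lemma sphereMean_zero_eulerX (g : C(Evec m, Evec m)) (f : smoothFun (Evec m × Evec m)) :
    sphereMean g 0 ((smoothFrame m).eulerX f) = 0 := by
  obtain ⟨h', -, h⟩ := hasEulerDeriv_sphereMean g f 0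
  exact h.symm.trans (zero_mul h')

/-- `t²(A(Eφ) - 2kA(φ)) - 2A(Eφ) - 2(m-2)A(φ)`, with `A` the mean at radius `t` and `φ` the sheared
function, does not depend on `t`; at `t = √2` the two terms in `A(Eφ)` cancel. -/
lemma sphereMean_sqrt_two_shearSubst {k : ℕ} {q : smoothFun (Evec m × Evec m)}
    (hd : ∀ i, (smoothFrame m).d i q = 0) (hU : (smoothFrame m).eulerU q = k * q)
    (hq : (smoothFrame m).lapU q = 0) (u : Evec m) :
    (m + 2 * k - 2) * sphereMean (.const _ u) √2 (smoothFrame.shearSubst m q)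
      = (m - 2) * sphereMean (.const _ u) 0 (smoothFrame.shearSubst m q) := by
  set φ := smoothFrame.shearSubst m q
  set E := (smoothFrame m).eulerX
  set A : ℝ → smoothFun (Evec m × Evec m) →ₗ[ℝ] ℝ := sphereMean (.const _ u)
  have hEuler (t : ℝ) : t ^ 2 * (A t (E (E φ)) - 2 * (k - 1) * A t (E φ) - 4 * k * A t φ)
      = 2 * (A t (E (E φ)) + (m - 2) * A t (E φ)) :=
    (isSphereFunctional_sphereMean_const t u).map_shear smoothFrame.isShear_shearSubst hd hU hq
  have hderiv : HasEulerDeriv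
      (fun t => t ^ 2 * (A t (E φ) - 2 * k * A t φ) - 2 * A t (E φ) - 2 * (m - 2) * A t φ)
      (fun t => 2 * t ^ 2 * (A t (E φ) - 2 * k * A t φ)
        + t ^ 2 * (A t (E (E φ)) - 2 * k * A t (E φ)) - 2 * A t (E (E φ))
        - 2 * (m - 2) * A t (E φ)) := fun t => by
    obtain ⟨a, ha, hae : t * a = A t (E φ)⟩ := hasEulerDeriv_sphereMean (.const _ u) φ t
    obtain ⟨b, hb, hbe : t * b = A t (E (E φ))⟩ := hasEulerDeriv_sphereMean (.const _ u) (E φ) t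
    refine ⟨_, (((hasDerivAt_pow 2 t).fun_mul (hb.fun_sub (ha.const_mul (2 * (k : ℝ))))).fun_sub
      (hb.const_mul 2)).fun_sub (ha.const_mul (2 * ((m : ℝ) - 2))), ?_⟩
    linear_combination (t ^ 2 - 2) * hbe - (2 * k * t ^ 2 + 2 * (m - 2)) * hae
  have hconst := hderiv.pow_mul_eq 0 (ρ := 2) (fun t _ => by linear_combination hEuler t)
    (t := √2) ⟨by positivity, by rw [Real.sqrt_lt'] <;> norm_num⟩
  rw [sphereMean_zero_eulerX, Real.sq_sqrt zero_le_two] at hconst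
  linear_combination -hconst / 2

lemma sphereMean_shearSubst_freeze (f : smoothFun (Evec m × Evec m)) (u : Evec m) (t : ℝ) :
    sphereMean (.const _ u) t (smoothFrame.shearSubst m (smoothFrame.freeze m f))
      = ∫ ζ, f.1 (0, u - (t ^ 2 * ⟪ζ, u⟫) • ζ) ∂(sphereM m) := by
  refine integral_congr_ae (Eventually.of_forall fun ζ => ?_)
  refine (smoothFrame.shearSubst_apply _ _ _).trans (congrArg (fun w => f.1 (0, w)) ?_)
  change u - ⟪t • ζ, u⟫ • (t • ζ) = _
  rw [real_inner_smul_left]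
  module

lemma sphereMean_reflField_zero {k : ℕ} {f : smoothFun (Evec m × Evec m)}
    (hU : (smoothFrame m).eulerU f = k * f) (hf : (smoothFrame m).lapU f = 0) (u : Evec m) :
    (m + 2 * k - 2) * sphereMean (reflField u) 0 f = (m - 2) * (omegaS m * f.1 (0, u)) := by
  have h := sphereMean_sqrt_two_shearSubst (fun i => smoothFrame.d_freeze i f)
    (by rw [smoothFrame.eulerU_freeze, hU, map_mul, map_natCast])
    (by rw [smoothFrame.lapU_freeze, hf, map_zero]) u
  simp only [sphereMean_shearSubst_freeze, Real.sq_sqrt zero_le_two, zero_pow two_ne_zero, zero_mul,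
    zero_smul, sub_zero, integral_sphereM_const] at h
  simp only [sphereMean_apply, zero_smul]
  exact h

end ShearValue

section SmoothTheorem

variable {m : ℕ}

lemma smooth_mean_value (hm : 3 ≤ m) (hm4 : m ≠ 4) {k : ℕ}
    {f : smoothFun (Evec m × Evec m)} (hU : (smoothFrame m).eulerU f = k * f)
    (hf : (smoothFrame m).lapU f = 0) {ρ : ℝ}
    (hB : ∀ x ∈ ball 0 ρ, ∀ u, ((smoothFrame m).bosonicLap k f).1 (x, u) = 0) (u : Evec m) {t : ℝ}
    (ht : t ∈ Set.Ico 0 ρ) : (m - 2) * omegaS m * f.1 (0, u)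
      = (m + 2 * k - 2) * ∫ ζ, f.1 (t • ζ, u - (2 * ⟪ζ, u⟫) • ζ) ∂(sphereM m) := by
  rw [mul_assoc, ← sphereMean_reflField_zero hU hf u,
    ← sphereMean_reflField_eq_sphereMean_zero hm hm4 hU hf hB u ht]
  rfl

end SmoothTheorem

section Mollification

open scoped Convolution ContDiff

variable {E V W : Type*} [NormedAddCommGroup E] [NormedSpace ℝ E]
  [NormedAddCommGroup V] [NormedSpace ℝ V] [NormedAddCommGroup W] [NormedSpace ℝ W]

lemma exists_compactSupport_eqOn [FiniteDimensional ℝ E] {n : ℕ∞} {f : E → V} {a : E} {r ρ : ℝ}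
    (hρ0 : 0 < ρ) (hρ : ρ < r) (hf : ContDiffOn ℝ n f (ball a r)) :
    ∃ g : E → V, ContDiff ℝ n g ∧ HasCompactSupport g ∧ Set.EqOn g f (ball a ρ) := by
  obtain ⟨ρ', hρ', hρ'r⟩ := exists_between hρ
  let χ : ContDiffBump a := ⟨ρ, ρ', hρ0, hρ'⟩
  have hsupp : tsupport χ ⊆ ball a r := χ.tsupport_eq ▸ closedBall_subset_ball hρ'r
  refine ⟨fun x => χ x • f x, contDiff_iff_contDiffAt.mpr fun x => ?_,
    χ.hasCompactSupport.smul_right, fun x hx => ?_⟩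
  · by_cases hx : x ∈ ball a r
    · exact χ.contDiff.contDiffAt.smul (hf.contDiffAt (isOpen_ball.mem_nhds hx))
    · have hzero : (fun x => χ x • f x) =ᶠ[𝓝 x] fun _ => 0 := by
        filter_upwards [(isClosed_tsupport χ).isOpen_compl.mem_nhds (mt (@hsupp x) hx)] with y hy
        rw [image_eq_zero_of_notMem_tsupport hy, zero_smul]
      exact contDiffAt_const.congr_of_eventuallyEq hzero
  · change χ x • f x = f x
    rw [χ.one_of_mem_closedBall (ball_subset_closedBall hx), one_smul]

variable [MeasurableSpace E] [BorelSpace E] [FiniteDimensional ℝ E] {μ : Measure E}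
  [μ.IsAddHaarMeasure] {η : E → ℝ} {g : E → V}

lemma fderiv_convolution_smul (hη : Continuous η) (hg : ContDiff ℝ 1 g)
    (hgs : HasCompactSupport g) : fderiv ℝ (η ⋆[.lsmul ℝ ℝ, μ] g)
      = (η ⋆[.lsmul ℝ ℝ, μ] fderiv ℝ g) := by
  ext1 x
  exact (hgs.hasFDerivAt_convolution_right _ hη.locallyIntegrable hg x).fderiv

lemma clm_convolution_smul [CompleteSpace V] [CompleteSpace W] (A : V →L[ℝ] W) (hη : Continuous η)
    (hg : Continuous g) (hgs : HasCompactSupport g) :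
    A ∘ (η ⋆[.lsmul ℝ ℝ, μ] g) = (η ⋆[.lsmul ℝ ℝ, μ] (A ∘ g)) := by
  ext1 x
  refine (A.integral_comp_comm
    (hgs.convolutionExists_right _ hη.locallyIntegrable hg x)).symm.trans ?_
  exact integral_congr_ae (ae_of_all _ fun t => map_smul A (η t) (g (x - t)))

lemma clm_fderiv_fderiv_convolution_smul [CompleteSpace V] [CompleteSpace W]
    (A : (E →L[ℝ] E →L[ℝ] V) →L[ℝ] W) (hη : Continuous η) (hg : ContDiff ℝ 2 g)
    (hgs : HasCompactSupport g) (x : E) : A (fderiv ℝ (fderiv ℝ (η ⋆[.lsmul ℝ ℝ, μ] g)) x)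
      = (η ⋆[.lsmul ℝ ℝ, μ] (A ∘ fderiv ℝ (fderiv ℝ g))) x := by
  have hdg : ContDiff ℝ 1 (fderiv ℝ g) := hg.fderiv_right (by norm_num)
  rw [fderiv_convolution_smul hη (hg.of_le (by norm_num)) hgs,
    fderiv_convolution_smul hη hdg (hgs.fderiv ℝ), ← clm_convolution_smul A hη
      (hdg.continuous_fderiv (by norm_num)) ((hgs.fderiv ℝ).fderiv ℝ)]
  rfl

end Mollification

section Approximation

open scoped Convolution ContDiff

variable {E V W : Type*} [NormedAddCommGroup E] [NormedSpace ℝ E] [FiniteDimensional ℝ E]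
  [NormedAddCommGroup V] [NormedSpace ℝ V] [CompleteSpace V]
  [NormedAddCommGroup W] [NormedSpace ℝ W] [CompleteSpace W]

theorem exists_contDiff_approx {f : E → V} {a : E} {r ρ ε : ℝ} (hf : ContDiffOn ℝ 2 f (ball a r))
    (hρ0 : 0 < ρ) (hρ : ρ < r) (hε : 0 < ε) :
    ∃ ψ : E → V, ContDiff ℝ ∞ ψ ∧ (∀ x ∈ ball a ρ, dist (ψ x) (f x) ≤ ε) ∧
      ∀ A : (E →L[ℝ] E →L[ℝ] V) →L[ℝ] W,
        (∀ x ∈ ball a r, A (fderiv ℝ (fderiv ℝ f) x) = 0) →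
          ∀ x ∈ ball a ρ, A (fderiv ℝ (fderiv ℝ ψ) x) = 0 := by
  borelize E
  let μ : Measure E := Measure.addHaar
  obtain ⟨ρ', hρ', hρ'r⟩ := exists_between hρ
  obtain ⟨g, hg, hgs, hgf⟩ := exists_compactSupport_eqOn (n := 2) (hρ0.trans hρ') hρ'r hf
  obtain ⟨δ, hδ, hgδ⟩ := Metric.uniformContinuous_iff.mp
    (hgs.uniformContinuous_of_continuous hg.continuous) ε hε
  let R := min δ (ρ' - ρ)
  have hR : 0 < R := lt_min hδ (sub_pos.mpr hρ')
  let χ : ContDiffBump (0 : E) := ⟨R / 2, R, half_pos hR, half_lt_self hR⟩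
  have hη : Continuous (χ.normed μ) := χ.continuous_normed
  refine ⟨χ.normed μ ⋆[.lsmul ℝ ℝ, μ] g, χ.hasCompactSupport_normed.contDiff_convolution_left _
    χ.contDiff_normed hg.continuous.locallyIntegrable, fun x hx => ?_, fun A hA x hx => ?_⟩
  · rw [← hgf (ball_subset_ball hρ'.le hx)]
    exact χ.dist_normed_convolution_le hg.continuous.aestronglyMeasurable fun y hy =>
      (hgδ (hy.trans_le (min_le_left _ _))).le
  · have hd2 : Continuous (fderiv ℝ (fderiv ℝ g)) :=
      (hg.fderiv_right (m := 1) (by norm_num)).continuous_fderiv (by norm_num)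
    rw [clm_fderiv_fderiv_convolution_smul A hη hg hgs, ← dist_le_zero]
    refine dist_convolution_le le_rfl χ.support_normed_eq.subset χ.nonneg_normed χ.integral_normed
      (A.continuous.comp hd2).aestronglyMeasurable fun y hy => dist_le_zero.mpr ?_
    have hyρ' : y ∈ ball a ρ' := by
      have hyR : dist y x < ρ' - ρ := lt_of_lt_of_le hy (min_le_right _ _)
      rw [mem_ball] at hx ⊢
      linarith [dist_triangle y x a]
    have hDgf : fderiv ℝ g =ᶠ[𝓝 y] fderiv ℝ f :=
      (hgf.eventuallyEq_of_mem (isOpen_ball.mem_nhds hyρ')).fderiv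
    rw [Function.comp_apply, hDgf.fderiv_eq]
    exact hA y (ball_subset_ball hρ'r.le hyρ')

end Approximation

section Interpolation

lemma exists_finset_interpolation {V B : Type*} [AddCommGroup V] [Module ℝ V]
    [FiniteDimensional ℝ V] (ev : B → Module.Dual ℝ V) (hev : ∀ p, (∀ b, ev b p = 0) → p = 0) :
    ∃ (T : Finset B) (q : B → V), ∀ p, p = ∑ b ∈ T, ev b p • q b := by
  classical
  have hbot : (Submodule.span ℝ (Set.range ev)).dualCoannihilator = ⊥ :=
    (Submodule.eq_bot_iff _).mpr fun p hp => hev p fun b =>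
      (Submodule.mem_dualCoannihilator p).mp hp _ (Submodule.subset_span ⟨b, rfl⟩)
  have hspan (φ : Module.Dual ℝ V) : φ ∈ Submodule.span ℝ (Set.range ev) := by
    rw [← Subspace.dualCoannihilator_dualAnnihilator_eq (W := Submodule.span ℝ (Set.range ev)),
      hbot, Submodule.dualAnnihilator_bot]
    trivial
  let e := Module.finBasis ℝ V
  choose c hc using fun i => Finsupp.mem_span_range_iff_exists_finsupp.mp (hspan (e.coord i))
  have hcoord (i) (p : V) :
      ∑ b ∈ Finset.univ.biUnion fun i => (c i).support, c i b * ev b p = e.repr p i := by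
    rw [← e.coord_apply, ← hc, Finsupp.sum_of_support_subset _ (Finset.subset_biUnion_of_mem
      (fun i => (c i).support) (Finset.mem_univ i)) _ (by simp), LinearMap.sum_apply]
    rfl
  refine ⟨Finset.univ.biUnion fun i => (c i).support, fun b => ∑ i, c i b • e i, fun p => ?_⟩
  conv_lhs => rw [← e.sum_repr p]
  simp only [← hcoord, Finset.sum_smul, Finset.smul_sum, smul_smul]
  rw [Finset.sum_comm]
  simp only [mul_comm]

open MvPolynomial in
lemma isHomogeneous_of_eval_smul {σ : Type*} [Finite σ] {P : MvPolynomial σ ℝ} {k : ℕ}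
    (h : ∀ (c : ℝ) (x : σ → ℝ), eval (c • x) P = c ^ k * eval x P) : P.IsHomogeneous k := by
  classical
  have := Fintype.ofFinite σ
  have hzero : ∑ d ∈ P.support, monomial d ((2 ^ d.degree - 2 ^ k) * coeff d P) = 0 := by
    refine MvPolynomial.funext fun x => ?_
    have h2 := h 2 x
    simp only [eval_eq', Pi.smul_apply, smul_eq_mul, mul_pow, Finset.prod_mul_distrib,
      Finset.prod_pow_eq_pow_sum, Finset.mul_sum] at h2
    simp only [map_sum, eval_monomial, map_zero, Finsupp.prod_fintype _ _ fun _ => pow_zero _,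
      Finsupp.degree_eq_sum]
    rw [← sub_eq_zero.mpr h2, ← Finset.sum_sub_distrib]
    exact Finset.sum_congr rfl fun d _ => by ring
  intro d hd
  have hcoeff := congrArg (coeff d) hzero
  rw [coeff_sum, coeff_zero] at hcoeff
  simp only [coeff_monomial, Finset.sum_ite_eq', MvPolynomial.mem_support_iff, ne_eq, hd,
    not_false_eq_true, if_true, mul_eq_zero, or_false, sub_eq_zero] at hcoeff
  change Finsupp.weight (fun _ => 1) d = k
  rw [← Finsupp.degree_eq_weight_one]
  exact Nat.pow_right_injective le_rfl (by exact_mod_cast hcoeff)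

end Interpolation

section HarmonicPolynomials

open scoped ContDiff

variable {m : ℕ}

lemma contDiff_pdv (i : Fin m) {p : Evec m → ℝ} (hp : ContDiff ℝ ∞ p) : ContDiff ℝ ∞ (pdv i p) :=
  (hp.fderiv_right (by simp)).clm_apply contDiff_const

lemma pdv_add (i : Fin m) {p q : Evec m → ℝ} (hp : ContDiff ℝ ∞ p) (hq : ContDiff ℝ ∞ q) :
    pdv i (p + q) = pdv i p + pdv i q := by
  ext u
  rw [pdv, fderiv_add (hp.differentiable (by simp) u) (hq.differentiable (by simp) u)]
  rfl

lemma pdv_const_smul (i : Fin m) (c : ℝ) {p : Evec m → ℝ} (hp : ContDiff ℝ ∞ p) :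
    pdv i (c • p) = c • pdv i p := by
  ext u
  rw [pdv, fderiv_const_smul (hp.differentiable (by simp) u)]
  rfl

lemma lapl_add {p q : Evec m → ℝ} (hp : ContDiff ℝ ∞ p) (hq : ContDiff ℝ ∞ q) (u : Evec m) :
    lapl (p + q) u = lapl p u + lapl q u := by
  simp only [lapl, pdv_add _ hp hq, pdv_add _ (contDiff_pdv _ hp) (contDiff_pdv _ hq),
    Pi.add_apply, Finset.sum_add_distrib]

lemma lapl_const_smul (c : ℝ) {p : Evec m → ℝ} (hp : ContDiff ℝ ∞ p) (u : Evec m) :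
    lapl (c • p) u = c * lapl p u := by
  simp only [lapl, pdv_const_smul _ c hp, pdv_const_smul _ c (contDiff_pdv _ hp),
    Pi.smul_apply, smul_eq_mul, Finset.mul_sum]

variable {k : ℕ} {q : Evec m → ℝ}

lemma contDiff_of_isHk (hq : IsHk m k q) : ContDiff ℝ ∞ q := by
  obtain ⟨⟨P, hP⟩, -⟩ := hq
  rw [funext hP]
  exact (AnalyticOnNhd.eval_mvPolynomial P).contDiff.comp
    (PiLp.contDiff_ofLp : ContDiff ℝ ∞ (WithLp.ofLp : Evec m → Fin m → ℝ))

variable (m k) in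
/-- The space `ℋ_k`, as a space of functions on `ℝ^m`. -/
def harmonicSubmodule : Submodule ℝ (Evec m → ℝ) where
  carrier := {q | IsHk m k q}
  zero_mem' := by
    refine ⟨⟨0, fun _ => (map_zero _).symm⟩, fun _ _ => (mul_zero _).symm, fun u => ?_⟩
    rw [← zero_smul ℝ (0 : Evec m → ℝ), lapl_const_smul 0 (p := 0) contDiff_const, zero_mul]
  add_mem' := by
    rintro p q hp hq
    obtain ⟨⟨P, hP⟩, hp_hom, hp_lap⟩ := id hp
    obtain ⟨⟨Q, hQ⟩, hq_hom, hq_lap⟩ := id hq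
    refine ⟨⟨P + Q, fun u => ?_⟩, fun c u => ?_, fun u => ?_⟩
    · rw [Pi.add_apply, hP, hQ, map_add]
    · rw [Pi.add_apply, hp_hom, hq_hom, Pi.add_apply, mul_add]
    · rw [lapl_add (contDiff_of_isHk hp) (contDiff_of_isHk hq), hp_lap, hq_lap, add_zero]
  smul_mem' := by
    rintro a q hq
    obtain ⟨⟨Q, hQ⟩, hq_hom, hq_lap⟩ := id hq
    refine ⟨⟨a • Q, fun u => ?_⟩, fun c u => ?_, fun u => ?_⟩
    · rw [Pi.smul_apply, hQ, MvPolynomial.smul_eval, smul_eq_mul]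
    · rw [Pi.smul_apply, hq_hom, Pi.smul_apply, smul_eq_mul, smul_eq_mul, mul_left_comm]
    · rw [lapl_const_smul a (contDiff_of_isHk hq), hq_lap, mul_zero]

instance finiteDimensional_harmonicSubmodule : FiniteDimensional ℝ (harmonicSubmodule m k) := by
  let evalFun : MvPolynomial (Fin m) ℝ →ₗ[ℝ] Evec m → ℝ :=
    LinearMap.pi fun u => (MvPolynomial.aeval fun i => u i).toLinearMap
  refine Submodule.finiteDimensional_of_le
    (S₂ := (MvPolynomial.restrictTotalDegree (Fin m) ℝ k).map evalFun) ?_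
  rintro q ⟨⟨P, hP⟩, hhom, -⟩
  have hPk : P.IsHomogeneous k := isHomogeneous_of_eval_smul fun c y => by
    have h := hhom c (WithLp.toLp 2 y)
    rw [hP, hP] at h
    exact h
  exact ⟨P, (MvPolynomial.mem_restrictTotalDegree _ _ _).mpr hPk.totalDegree_le,
    funext fun u => (hP u).symm⟩

lemma eq_zero_of_homogeneous_of_ball {k : ℕ} {q : Evec m → ℝ}
    (hq : ∀ (c : ℝ), 0 < c → ∀ u, q (c • u) = c ^ k * q u)
    (h : ∀ u ∈ ball (0 : Evec m) 1, q u = 0) (u : Evec m) : q u = 0 := by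
  have hc : 0 < (‖u‖ + 1)⁻¹ := by positivity
  have hcu : (‖u‖ + 1)⁻¹ • u ∈ ball (0 : Evec m) 1 := by
    rw [mem_ball_zero_iff, norm_smul, norm_inv, Real.norm_of_nonneg (by positivity),
      inv_mul_lt_one₀ (by positivity)]
    exact lt_add_one _
  have hu := h _ hcu
  rw [hq _ hc] at hu
  exact (mul_eq_zero_iff_left (pow_pos hc k).ne').mp hu

lemma exists_harmonic_interpolation (m k : ℕ) :
    ∃ (T : Finset (ball (0 : Evec m) 1)) (q : T → Evec m → ℝ), (∀ b, IsHk m k (q b)) ∧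
      ∀ p, IsHk m k p → p = ∑ b : T, p b • q b := by
  obtain ⟨T, q, hTq⟩ := exists_finset_interpolation
    (fun b : ball (0 : Evec m) 1 => LinearMap.proj (b : Evec m) ∘ₗ (harmonicSubmodule m k).subtype)
    fun p hp => Subtype.ext <| funext <|
      eq_zero_of_homogeneous_of_ball (fun c _ => p.2.2.1 c) fun u hu => hp ⟨u, hu⟩
  refine ⟨T, fun b => q b, fun b => (q b).2, fun p hp => ?_⟩
  rw [Finset.sum_coe_sort T fun b => p b • (q b).1]
  simpa using congrArg Subtype.val (hTq ⟨p, hp⟩)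

end HarmonicPolynomials

section HarmonicSlices

variable {m k : ℕ} {f : smoothFun (Evec m × Evec m)}

namespace smoothFrame

lemma pd1_eq_d (i : Fin m) (f : smoothFun (Evec m × Evec m)) :
    pd1 i (fun x u => f.1 (x, u)) = fun x u => ((smoothFrame m).d i f).1 (x, u) :=
  funext fun x => funext fun u => congrArg (· (EuclideanSpace.single i 1))
    ((smoothFun.differentiable f (x, u)).hasFDerivAt.comp x
      (hasFDerivAt_prodMk_left (𝕜 := ℝ) x u)).fderiv

lemma pd2_eq_e (i : Fin m) (f : smoothFun (Evec m × Evec m)) :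
    pd2 i (fun x u => f.1 (x, u)) = fun x u => ((smoothFrame m).e i f).1 (x, u) :=
  funext fun x => funext fun u => congrArg (· (EuclideanSpace.single i 1))
    ((smoothFun.differentiable f (x, u)).hasFDerivAt.comp u (hasFDerivAt_prodMk_right x u)).fderiv

lemma bosonicLap_apply (f : smoothFun (Evec m × Evec m)) (hk : (m + 2 * k - 2 : ℝ) ≠ 0)
    (hk' : (m + 2 * k - 4 : ℝ) ≠ 0) (x u : Evec m) : ((smoothFrame m).bosonicLap k f).1 (x, u)
      = (m + 2 * k - 2) * (m + 2 * k - 4) * Dk m k (fun x u => f.1 (x, u)) x u := by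
  let ev := smoothFun.eval (x, u)
  have hlap : ev ((smoothFrame m).lapX f)
      = ∑ i, ev ((smoothFrame m).d i ((smoothFrame m).d i f)) := by
    rw [BivariateFrame.lapX_apply, map_sum]
  have hud : ev ((smoothFrame m).ud ((smoothFrame m).ed f)) = ∑ i, ∑ j,
      u i * ev ((smoothFrame m).d i ((smoothFrame m).e j ((smoothFrame m).d j f))) := by
    simp only [BivariateFrame.ud_apply, map_sum, map_mul]
    refine Finset.sum_congr rfl fun i _ => ?_
    rw [BivariateFrame.ed_apply, map_sum, map_sum, Finset.mul_sum]
    rfl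
  have hed : ev ((smoothFrame m).ed ((smoothFrame m).ed f)) = ∑ i, ∑ j,
      ev ((smoothFrame m).e i ((smoothFrame m).d i
        ((smoothFrame m).e j ((smoothFrame m).d j f)))) := by
    rw [BivariateFrame.ed_apply, map_sum]
    refine Finset.sum_congr rfl fun i _ => ?_
    rw [BivariateFrame.ed_apply, map_sum, map_sum, map_sum]
  change ev ((smoothFrame m).bosonicLap k f) = _
  simp only [Dk, pd1_eq_d, pd2_eq_e, BivariateFrame.bosonicLap, map_add, map_sub, map_mul,
    map_natCast, map_ofNat, hlap, hud, hed, show ev (smoothFrame m).sigma = ‖u‖ ^ 2 from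
    sigma_apply (x, u)]
  field_simp
  rfl

lemma eulerU_eq_of_isHk (hf : ∀ x, IsHk m k fun u => f.1 (x, u)) :
    (smoothFrame m).eulerU f = k * f := by
  ext ⟨x, u⟩
  obtain ⟨y, hy, hyu⟩ := hasEulerDeriv_smul_right f x u 1
  simp only [(hf x).2.1] at hy
  simp only [one_mul, one_smul] at hyu
  rw [← hyu, hy.unique ((hasDerivAt_pow k 1).mul_const (f.1 (x, u))), one_pow, mul_one]
  rfl

lemma lapU_eq_zero_of_isHk (hf : ∀ x, IsHk m k fun u => f.1 (x, u)) :
    (smoothFrame m).lapU f = 0 := by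
  ext ⟨x, u⟩
  have hlap : lapl (fun u => f.1 (x, u)) u
      = ∑ i, pd2 i (pd2 i fun x u => f.1 (x, u)) x u := rfl
  simp only [pd2_eq_e, (hf x).2.2] at hlap
  rw [BivariateFrame.lapU_apply, smoothFun.sum_apply, ← hlap]
  rfl

end smoothFrame

end HarmonicSlices

section Expansion

open scoped ContDiff

variable {m k : ℕ} {ι : Type*} [Fintype ι] {Ω W : Set (Evec m)} {α : Evec m → ι → ℝ}
  {q : ι → Evec m → ℝ} {f : Evec m → Evec m → ℝ}

/-- Separation of variables on `Ω × W`: `f(x, u) = ∑ b, α_b(x) q_b(u)`. -/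
def ExpandsOn (Ω W : Set (Evec m)) (α : Evec m → ι → ℝ) (q : ι → Evec m → ℝ)
    (f : Evec m → Evec m → ℝ) : Prop :=
  ∀ x ∈ Ω, ∀ u ∈ W, f x u = ∑ b, α x b * q b u

namespace ExpandsOn

lemma pd1 (h : ExpandsOn Ω W α q f) (hΩ : IsOpen Ω) (hα : DifferentiableOn ℝ α Ω) (i : Fin m) :
    ExpandsOn Ω W (fun x => fderiv ℝ α x (EuclideanSpace.single i 1)) q (pd1 i f) := by
  intro x hx u hu
  have hfα : (fun x => f x u) =ᶠ[𝓝 x] fun x => ∑ b, α x b * q b u :=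
    eventually_of_mem (hΩ.mem_nhds hx) fun y hy => h y hy u hu
  have hderiv (b : ι) := (hasFDerivAt_pi'.mp
    (hα.differentiableAt (hΩ.mem_nhds hx)).hasFDerivAt b).mul_const (q b u)
  rw [_root_.pd1, hfα.fderiv_eq, (HasFDerivAt.fun_sum fun b _ => hderiv b).fderiv]
  simp [mul_comm]

lemma pd2 (h : ExpandsOn Ω W α q f) (hW : IsOpen W) (hq : ∀ b, Differentiable ℝ (q b))
    (i : Fin m) : ExpandsOn Ω W α (fun b => pdv i (q b)) (pd2 i f) := by
  intro x hx u hu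
  have hfq : f x =ᶠ[𝓝 u] fun u => ∑ b, α x b * q b u :=
    eventually_of_mem (hW.mem_nhds hu) fun v hv => h x hx v hv
  have hderiv (b : ι) := (hq b u).hasFDerivAt.const_mul (α x b)
  rw [_root_.pd2, hfq.fderiv_eq, (HasFDerivAt.fun_sum fun b _ => hderiv b).fderiv]
  simp [pdv]

end ExpandsOn

/-- The functional `T ↦ ∑ b, T(e_i, e_j)_b c_b` of a vector-valued bilinear map. -/
def contract (c : ι → ℝ) (i j : Fin m) : (Evec m →L[ℝ] Evec m →L[ℝ] (ι → ℝ)) →L[ℝ] ℝ :=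
  (∑ b, c b • ContinuousLinearMap.proj b) ∘L
    ContinuousLinearMap.apply ℝ (ι → ℝ) (EuclideanSpace.single j 1) ∘L
    ContinuousLinearMap.apply ℝ (Evec m →L[ℝ] (ι → ℝ)) (EuclideanSpace.single i 1)

lemma contract_apply (c : ι → ℝ) (i j : Fin m) (T : Evec m →L[ℝ] Evec m →L[ℝ] (ι → ℝ)) :
    contract c i j T
      = ∑ b, T (EuclideanSpace.single i 1) (EuclideanSpace.single j 1) b * c b := by
  simp [contract, mul_comm]

set_option maxSynthPendingDepth 3 in
/-- The bosonic Laplacian of `∑ b, α_b(x) q_b(u)` at a fixed `u`, as a functional of the second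
derivative of `α`. -/
def bosonicSymbol (k : ℕ) (q : ι → Evec m → ℝ) (u : Evec m) :
    (Evec m →L[ℝ] Evec m →L[ℝ] (ι → ℝ)) →L[ℝ] ℝ :=
  (∑ i : Fin m, contract (fun b => q b u) i i)
    - (4 / ((m : ℝ) + 2 * k - 2)) •
        ∑ i : Fin m, ∑ j : Fin m, u i • contract (fun b => pdv j (q b) u) i j
    + (4 * ‖u‖ ^ 2 / (((m : ℝ) + 2 * k - 2) * ((m : ℝ) + 2 * k - 4))) •
        ∑ i : Fin m, ∑ j : Fin m, contract (fun b => pdv i (pdv j (q b)) u) i j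

set_option maxSynthPendingDepth 3 in
lemma ExpandsOn.Dk_eq (h : ExpandsOn Ω W α q f) (hΩ : IsOpen Ω) (hW : IsOpen W)
    (hα : ContDiffOn ℝ 2 α Ω) (hq : ∀ b, ContDiff ℝ ∞ (q b)) {x u : Evec m} (hx : x ∈ Ω)
    (hu : u ∈ W) : Dk m k f x u = bosonicSymbol k q u (fderiv ℝ (fderiv ℝ α) x) := by
  have hα' : DifferentiableOn ℝ (fderiv ℝ α) Ω :=
    (hα.fderiv_of_isOpen hΩ (m := 1) (by norm_num)).differentiableOn (by norm_num)
  have hdα (j : Fin m) := h.pd1 hΩ (hα.differentiableOn (by norm_num)) j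
  have hddα (j : Fin m) : DifferentiableOn ℝ
      (fun y => fderiv ℝ α y (EuclideanSpace.single j 1)) Ω :=
    hα'.clm_apply (differentiableOn_const _)
  have hq' (b : ι) : Differentiable ℝ (q b) := (hq b).differentiable (by simp)
  have hpq (j : Fin m) (b : ι) : Differentiable ℝ (pdv j (q b)) :=
    (contDiff_pdv j (hq b)).differentiable (by simp)
  have hlap (i : Fin m) := (hdα i).pd1 hΩ (hddα i) i x hx u hu
  have hud (i j : Fin m) := ((hdα j).pd2 hW hq' j).pd1 hΩ (hddα j) i
  have hed (i j : Fin m) := (hud i j).pd2 hW (hpq j) i x hx u hu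
  have hD (i j : Fin m) := fderiv_fderiv_apply (hα'.differentiableAt (hΩ.mem_nhds hx))
    (EuclideanSpace.single j (1 : ℝ)) (EuclideanSpace.single i 1)
  simp only [Dk, hlap, hud _ _ x hx u hu, hed, hD, bosonicSymbol, add_apply, sub_apply,
    smul_apply, sum_apply, contract_apply, smul_eq_mul]

lemma Dk_comp_add_left (k : ℕ) (f : Evec m → Evec m → ℝ) (a x u : Evec m) :
    Dk m k (fun x => f (a + x)) x u = Dk m k f (a + x) u := by
  have hpd1 (i : Fin m) (g : Evec m → Evec m → ℝ) :
      pd1 i (fun x => g (a + x)) = fun x => pd1 i g (a + x) := by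
    ext x u
    exact congrArg (fun L : Evec m →L[ℝ] ℝ => L (EuclideanSpace.single i 1))
      (fderiv_comp_add_left (f := fun x => g x u) a)
  have hpd2 (i : Fin m) (g : Evec m → Evec m → ℝ) :
      pd2 i (fun x => g (a + x)) = fun x => pd2 i g (a + x) := rfl
  simp only [Dk, hpd1, hpd2]

lemma exists_expandsOn_of_C2Hk (hf : C2Hk m k Ω f) :
    ∃ (T : Finset (ball (0 : Evec m) 1)) (q : T → Evec m → ℝ) (φ : Evec m → T → ℝ),
      (∀ b, IsHk m k (q b)) ∧ ContDiffOn ℝ 2 φ Ω ∧ ExpandsOn Ω (closedBall 0 1) φ q f := by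
  obtain ⟨T, q, hq, hTq⟩ := exists_harmonic_interpolation m k
  refine ⟨T, q, fun x b => f x b, hq, contDiffOn_pi.mpr fun b => ?_, fun x hx u hu => ?_⟩
  · exact hf.1.comp (contDiff_id.prodMk contDiff_const).contDiffOn fun x hx => ⟨hx, b.1.2⟩
  · obtain ⟨p, hp, hfp⟩ := hf.2 x hx
    rw [hfp u hu, hTq p hp, Finset.sum_apply]
    exact Finset.sum_congr rfl fun b _ =>
      congrArg (· * q b u) (hfp b (ball_subset_closedBall b.1.2)).symm

end Expansion

section SmoothApproximation

open scoped ContDiff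

variable {m k : ℕ}

/-- The smooth function `∑ b, ψ_b(x) q_b(u)`. -/
def ofExpansion {ι : Type*} [Fintype ι] {ψ : Evec m → ι → ℝ} {q : ι → Evec m → ℝ}
    (hψ : ContDiff ℝ ∞ ψ) (hq : ∀ b, ContDiff ℝ ∞ (q b)) : smoothFun (Evec m × Evec m) :=
  ⟨fun p => ∑ b, ψ p.1 b * q b p.2, ContDiff.sum fun b _ =>
    ((contDiff_pi.mp hψ b).comp contDiff_fst).mul ((hq b).comp contDiff_snd)⟩

lemma isHk_sum_mul {ι : Type*} [Fintype ι] {q : ι → Evec m → ℝ} (hq : ∀ b, IsHk m k (q b))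
    (c : ι → ℝ) : IsHk m k fun u => ∑ b, c b * q b u := by
  have h : ∑ b, c b • q b ∈ harmonicSubmodule m k :=
    Submodule.sum_mem _ fun b _ => Submodule.smul_mem _ _ (hq b)
  rwa [show ∑ b, c b • q b = fun u => ∑ b, c b * q b u from
    funext fun u => Finset.sum_apply u _ _] at h

lemma bosonicLap_eq_zero_of_ball (hk : (m + 2 * k - 2 : ℝ) ≠ 0) (hk' : (m + 2 * k - 4 : ℝ) ≠ 0)
    {F : smoothFun (Evec m × Evec m)} (hU : (smoothFrame m).eulerU F = k * F) {x : Evec m}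
    (hF : ∀ u ∈ ball 0 1, Dk m k (fun x u => F.1 (x, u)) x u = 0) (u : Evec m) :
    ((smoothFrame m).bosonicLap k F).1 (x, u) = 0 := by
  refine eq_zero_of_homogeneous_of_ball (q := fun u => ((smoothFrame m).bosonicLap k F).1 (x, u))
    (k := k) (fun c hc u => ?_) (fun u hu => ?_) u
  · exact smoothFrame.apply_smul_right ((smoothFrame m).eulerU_bosonicLap hU) x u hc
  · rw [smoothFrame.bosonicLap_apply F hk hk', hF u hu, mul_zero]

lemma abs_sum_mul_sub_sum_mul_le {ι : Type*} [Fintype ι] (v w q : ι → ℝ) :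
    |∑ b, v b * q b - ∑ b, w b * q b| ≤ dist v w * ∑ b, |q b| := by
  rw [← Finset.sum_sub_distrib, Finset.mul_sum]
  refine (Finset.abs_sum_le_sum_abs _ _).trans (Finset.sum_le_sum fun b _ => ?_)
  rw [← sub_mul, abs_mul]
  exact mul_le_mul_of_nonneg_right (dist_le_pi_dist v w b) (abs_nonneg _)

theorem exists_smooth_approx (hk : (m + 2 * k - 2 : ℝ) ≠ 0) (hk' : (m + 2 * k - 4 : ℝ) ≠ 0)
    {a : Evec m} {r ρ δ : ℝ} (hρ0 : 0 < ρ) (hρ : ρ < r) (hδ : 0 < δ) {f : Evec m → Evec m → ℝ}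
    (hf : C2Hk m k (ball a r) f)
    (hD : ∀ x ∈ ball a r, ∀ u ∈ ball (0 : Evec m) 1, Dk m k f x u = 0) :
    ∃ F : smoothFun (Evec m × Evec m), (smoothFrame m).eulerU F = k * F ∧
      (smoothFrame m).lapU F = 0 ∧
      (∀ x ∈ ball 0 ρ, ∀ u, ((smoothFrame m).bosonicLap k F).1 (x, u) = 0) ∧
      ∀ x ∈ ball 0 ρ, ∀ u ∈ closedBall 0 1, |F.1 (x, u) - f (a + x) u| ≤ δ := by
  obtain ⟨T, q, φ, hqH, hφ, hfφ⟩ := exists_expandsOn_of_C2Hk hf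
  have hq (b : T) : ContDiff ℝ ∞ (q b) := contDiff_of_isHk (hqH b)
  obtain ⟨C, hC⟩ := (isCompact_closedBall (0 : Evec m) 1).exists_bound_of_continuousOn
    (continuous_finsetSum Finset.univ fun b _ => (hq b).continuous.abs).continuousOn
  have hC' (u) (hu : u ∈ closedBall (0 : Evec m) 1) : ∑ b, |q b u| ≤ C :=
    (le_abs_self _).trans (hC u hu)
  have hC0 : 0 ≤ C := (norm_nonneg _).trans (hC 0 (mem_closedBall_self zero_le_one))
  obtain ⟨ψ, hψ, hψφ, hψD⟩ := exists_contDiff_approx (W := ℝ) hφ hρ0 hρ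
    (div_pos hδ (add_pos_of_nonneg_of_pos hC0 one_pos))
  have hψa : ContDiff ℝ ∞ fun x => ψ (a + x) := hψ.comp (contDiff_const.add contDiff_id)
  have hmem {x : Evec m} (hx : x ∈ ball 0 ρ) : a + x ∈ ball a ρ := by simpa using hx
  have hHk (x : Evec m) := isHk_sum_mul hqH (ψ (a + x))
  have hU := smoothFrame.eulerU_eq_of_isHk (f := ofExpansion hψa hq) hHk
  refine ⟨ofExpansion hψa hq, hU, smoothFrame.lapU_eq_zero_of_isHk hHk, fun x hx =>
    bosonicLap_eq_zero_of_ball hk hk' hU fun u hu => ?_, fun x hx u hu => ?_⟩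
  · have hψq : ExpandsOn Set.univ Set.univ ψ q fun x u => ∑ b, ψ x b * q b u :=
      fun _ _ _ _ => rfl
    refine (Dk_comp_add_left k (fun x u => ∑ b, ψ x b * q b u) a x u).trans ?_
    rw [hψq.Dk_eq isOpen_univ isOpen_univ (hψ.of_le (by norm_cast)).contDiffOn hq
      (Set.mem_univ _) (Set.mem_univ _)]
    refine hψD _ (fun y hy => ?_) _ (hmem hx)
    have hball : ExpandsOn (ball a r) (ball 0 1) φ q f := fun y hy v hv =>
      hfφ y hy v (ball_subset_closedBall hv)
    rw [← hball.Dk_eq isOpen_ball isOpen_ball hφ hq hy hu, hD y hy u hu]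
  · rw [hfφ _ (ball_subset_ball hρ.le (hmem hx)) u hu]
    refine (abs_sum_mul_sub_sum_mul_le _ _ _).trans ((mul_le_mul (hψφ _ (hmem hx))
      ((hC' u hu).trans (lt_add_one C).le) (by positivity) (by positivity)).trans_eq ?_)
    exact div_mul_cancel₀ _ (by positivity)

end SmoothApproximation

section MeanValue

variable {m k : ℕ} {a : Evec m} {r : ℝ} {f : Evec m → Evec m → ℝ}

lemma norm_sub_two_inner_smul {ζ : Evec m} (hζ : ‖ζ‖ = 1) (u : Evec m) :
    ‖u - (2 * ⟪ζ, u⟫) • ζ‖ = ‖u‖ := by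
  rw [← sq_eq_sq₀ (norm_nonneg _) (norm_nonneg _), norm_sub_sq_real, inner_smul_right, norm_smul,
    hζ, real_inner_comm ζ u, mul_one, Real.norm_eq_abs, sq_abs]
  ring

lemma continuousOn_integral_sphereM {s : Set ℝ} (hs : IsCompact s) {G : ℝ → Evec m → ℝ}
    (hG : ContinuousOn (Function.uncurry G) (s ×ˢ sphere 0 1)) :
    ContinuousOn (fun t => ∫ ζ, G t ζ ∂(sphereM m)) s := fun t₀ ht₀ => by
  obtain ⟨C, hC⟩ := (hs.prod (isCompact_sphere (0 : Evec m) 1)).exists_bound_of_continuousOn hG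
  have hsphere := (ae_norm_eq_one m).mono fun ζ hζ => mem_sphere_zero_iff_norm.mpr hζ
  have hright {t : ℝ} (ht : t ∈ s) : ContinuousOn (G t) (sphere 0 1) :=
    hG.comp (f := fun ζ => (t, ζ)) (Continuous.prodMk_right t).continuousOn fun ζ hζ => ⟨ht, hζ⟩
  have hleft {ζ : Evec m} (hζ : ζ ∈ sphere 0 1) : ContinuousOn (fun t => G t ζ) s :=
    hG.comp (f := fun t => (t, ζ)) (Continuous.prodMk_left ζ).continuousOn fun t ht => ⟨ht, hζ⟩
  exact continuousWithinAt_of_dominated (bound := fun _ => C)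
    (eventually_mem_nhdsWithin.mono fun t ht => (integrable_sphereM (hright ht)).1)
    (eventually_mem_nhdsWithin.mono fun t ht => hsphere.mono fun ζ hζ => hC (t, ζ) ⟨ht, hζ⟩)
    (integrable_const C) (hsphere.mono fun ζ hζ => hleft hζ t₀ ht₀)

lemma continuousOn_reflected_sphere
    (hc : ContinuousOn (fun q : Evec m × Evec m => f q.1 q.2)
      (closedBall a r ×ˢ closedBall (0 : Evec m) 1)) {u : Evec m} (hu : u ∈ closedBall 0 1) :
    ContinuousOn (fun p : ℝ × Evec m => f (a + p.1 • p.2) (u - (2 * ⟪p.2, u⟫) • p.2))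
      (Set.Icc 0 r ×ˢ sphere 0 1) := by
  refine hc.comp (f := fun p : ℝ × Evec m => (a + p.1 • p.2, u - (2 * ⟪p.2, u⟫) • p.2))
    (by fun_prop) fun p ⟨ht, hζ⟩ => ?_
  rw [mem_sphere_zero_iff_norm] at hζ
  rw [mem_closedBall_zero_iff] at hu
  simpa [norm_smul, hζ, norm_sub_two_inner_smul hζ, abs_of_nonneg ht.1, hu] using ht.2

lemma abs_integral_sphereM_sub_le {g h : Evec m → ℝ} (hg : ContinuousOn g (sphere 0 1))
    (hh : ContinuousOn h (sphere 0 1)) {δ : ℝ} (hgh : ∀ ζ ∈ sphere 0 1, |g ζ - h ζ| ≤ δ) :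
    |∫ ζ, g ζ ∂(sphereM m) - ∫ ζ, h ζ ∂(sphereM m)| ≤ δ * omegaS m := by
  rw [← integral_sub (integrable_sphereM hg) (integrable_sphereM hh)]
  exact norm_integral_le_of_norm_le_const (f := fun ζ => g ζ - h ζ)
    ((ae_norm_eq_one m).mono fun ζ hζ => hgh ζ (mem_sphere_zero_iff_norm.mpr hζ))

lemma abs_mean_value_defect_le (hm : 3 ≤ m) (hm4 : m ≠ 4) (hf : C2Hk m k (ball a r) f)
    (hc : ContinuousOn (fun q : Evec m × Evec m => f q.1 q.2)
      (closedBall a r ×ˢ closedBall (0 : Evec m) 1))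
    (hD : ∀ x ∈ ball a r, ∀ u ∈ ball (0 : Evec m) 1, Dk m k f x u = 0) {u : Evec m}
    (hu : u ∈ closedBall 0 1) {t : ℝ} (ht : t ∈ Set.Ico 0 r) {δ : ℝ} (hδ : 0 < δ) :
    |(m - 2) * omegaS m * f a u
      - (m + 2 * k - 2) * ∫ ζ, f (a + t • ζ) (u - (2 * ⟪ζ, u⟫) • ζ) ∂(sphereM m)|
      ≤ δ * ((2 * m + 2 * k - 4) * omegaS m) := by
  have hm2 : (0 : ℝ) ≤ m - 2 := sub_nonneg.mpr (by exact_mod_cast (by omega : 2 ≤ m))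
  have hk : (0 : ℝ) < m + 2 * k - 2 := by exact_mod_cast (by omega : (0 : ℤ) < m + 2 * k - 2)
  have hk' : (m + 2 * k - 4 : ℝ) ≠ 0 := by exact_mod_cast (by omega : (m + 2 * k - 4 : ℤ) ≠ 0)
  obtain ⟨ρ, htρ, hρr⟩ := exists_between ht.2
  have hρ := ht.1.trans_lt htρ
  obtain ⟨F, hFu, hFlap, hFD, hF⟩ := exists_smooth_approx hk.ne' hk' hρ hρr hδ hf hD
  have hmean := smooth_mean_value hm hm4 hFu hFlap hFD u ⟨ht.1, htρ⟩
  have hcenter : |F.1 (0, u) - f a u| ≤ δ := by simpa using hF 0 (mem_ball_self hρ) u hu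
  have hint := abs_integral_sphereM_sub_le (m := m) (δ := δ)
    (g := fun ζ => F.1 (t • ζ, u - (2 * ⟪ζ, u⟫) • ζ))
    (h := fun ζ => f (a + t • ζ) (u - (2 * ⟪ζ, u⟫) • ζ))
    ((smoothFun.continuous F).comp (by fun_prop)).continuousOn
    ((continuousOn_reflected_sphere hc hu).comp (Continuous.prodMk_right t).continuousOn
      fun ζ hζ => ⟨⟨ht.1, ht.2.le⟩, hζ⟩) fun ζ hζ => by
    rw [mem_sphere_zero_iff_norm] at hζ
    refine hF _ ?_ _ ?_
    · rwa [mem_ball_zero_iff, norm_smul, hζ, mul_one, Real.norm_of_nonneg ht.1]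
    · rwa [mem_closedBall_zero_iff, norm_sub_two_inner_smul hζ, ← mem_closedBall_zero_iff]
  set I := ∫ ζ, f (a + t • ζ) (u - (2 * ⟪ζ, u⟫) • ζ) ∂(sphereM m)
  set J := ∫ ζ, F.1 (t • ζ, u - (2 * ⟪ζ, u⟫) • ζ) ∂(sphereM m)
  calc |(m - 2) * omegaS m * f a u - (m + 2 * k - 2) * I|
      = |(m + 2 * k - 2) * (J - I) - (m - 2) * omegaS m * (F.1 (0, u) - f a u)| := by
        congr 1
        linear_combination hmean
    _ ≤ (m + 2 * k - 2) * |J - I| + (m - 2) * omegaS m * |F.1 (0, u) - f a u| := by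
        refine (abs_sub _ _).trans_eq ?_
        rw [abs_mul, abs_mul, abs_of_pos hk,
          abs_of_nonneg (mul_nonneg hm2 (omegaS_pos (by omega)).le)]
    _ ≤ (m + 2 * k - 2) * (δ * omegaS m) + (m - 2) * omegaS m * δ := by
        have := (omegaS_pos (m := m) (by omega)).le
        gcongr
    _ = δ * ((2 * m + 2 * k - 4) * omegaS m) := by ring

theorem mean_value_of_lt (hm : 3 ≤ m) (hm4 : m ≠ 4) (hf : C2Hk m k (ball a r) f)
    (hc : ContinuousOn (fun q : Evec m × Evec m => f q.1 q.2)
      (closedBall a r ×ˢ closedBall (0 : Evec m) 1))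
    (hD : ∀ x ∈ ball a r, ∀ u ∈ ball (0 : Evec m) 1, Dk m k f x u = 0) {u : Evec m}
    (hu : u ∈ closedBall 0 1) {t : ℝ} (ht : t ∈ Set.Ico 0 r) : (m - 2) * omegaS m * f a u
      = (m + 2 * k - 2) * ∫ ζ, f (a + t • ζ) (u - (2 * ⟪ζ, u⟫) • ζ) ∂(sphereM m) := by
  have hpos : 0 < (2 * m + 2 * k - 4) * omegaS m :=
    mul_pos (by exact_mod_cast (by omega : (0 : ℤ) < 2 * m + 2 * k - 4)) (omegaS_pos (by omega))
  refine eq_of_forall_dist_le fun ε hε => ?_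
  rw [Real.dist_eq, ← div_mul_cancel₀ ε hpos.ne']
  exact abs_mean_value_defect_le hm hm4 hf hc hD hu ht (div_pos hε hpos)

theorem mean_value (hm : 3 ≤ m) (hm4 : m ≠ 4) (hr : 0 < r) (hf : C2Hk m k (ball a r) f)
    (hc : ContinuousOn (fun q : Evec m × Evec m => f q.1 q.2)
      (closedBall a r ×ˢ closedBall (0 : Evec m) 1))
    (hD : ∀ x ∈ ball a r, ∀ u ∈ ball (0 : Evec m) 1, Dk m k f x u = 0) {u : Evec m}
    (hu : u ∈ closedBall 0 1) : (m - 2) * omegaS m * f a u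
      = (m + 2 * k - 2) * ∫ ζ, f (a + r • ζ) (u - (2 * ⟪ζ, u⟫) • ζ) ∂(sphereM m) := by
  have hcont := continuousOn_integral_sphereM (m := m) isCompact_Icc
    (G := fun t ζ => f (a + t • ζ) (u - (2 * ⟪ζ, u⟫) • ζ)) (continuousOn_reflected_sphere hc hu)
  exact Set.EqOn.of_subset_closure (s := Set.Ico 0 r) (t := Set.Icc 0 r)
    (f := fun _ => (m - 2) * omegaS m * f a u)
    (g := fun t => (m + 2 * k - 2) * ∫ ζ, f (a + t • ζ) (u - (2 * ⟪ζ, u⟫) • ζ) ∂(sphereM m))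
    (fun t ht => mean_value_of_lt hm hm4 hf hc hD hu ht) continuousOn_const
    (continuousOn_const.mul hcont) Set.Ico_subset_Icc_self (closure_Ico hr.ne).ge
    (Set.right_mem_Icc.mpr hr.le)

end MeanValue

end BosonicMeanValue

theorem stmt_13_general (m k : ℕ) (hm : 3 ≤ m) (hm4 : m ≠ 4)
    (a : Evec m) (r : ℝ) (hr : 0 < r) (f : Evec m → Evec m → ℝ)
    (hreg : C2Hk m k (ball a r) f)
    (hc : ContinuousOn (fun q : Evec m × Evec m => f q.1 q.2)
      (closedBall a r ×ˢ closedBall (0 : Evec m) 1))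
    (hD : ∀ x ∈ ball a r, ∀ u ∈ ball (0 : Evec m) 1, Dk m k f x u = 0) :
    ∀ ν : Evec m, ‖ν‖ ≤ 1 →
      f a ν = (cmk m k / 2) * ∫ ζ, f (a + r • ζ) (reflv ζ ν) ∂(sphereM m) := by
  intro ν hν
  have h := BosonicMeanValue.mean_value hm hm4 hr hreg hc hD (mem_closedBall_zero_iff.mpr hν)
  have hrefl := BosonicMeanValue.integral_sphereM_congr
    (g := fun ζ => f (a + r • ζ) (reflv ζ ν)) (h := fun ζ => f (a + r • ζ) (ν - (2 * ⟪ζ, ν⟫) • ζ))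
    fun ζ hζ => by rw [reflv, hζ, one_pow, div_one]
  have hω : omegaS m ≠ 0 := (BosonicMeanValue.omegaS_pos (by omega)).ne'
  have hm2 : (m - 2 : ℝ) ≠ 0 := sub_ne_zero.mpr (by exact_mod_cast (by omega : m ≠ 2))
  rw [hrefl, cmk]
  field_simp
  linear_combination h

/-- mean-value property, sphere version, for null solutions of the
bosonic Laplacian, `m > 4`. -/
theorem stmt_13 (m k : ℕ) (hm : 4 < m) (hk : 1 ≤ k)
    (a : Evec m) (r : ℝ) (hr : 0 < r) (f : Evec m → Evec m → ℝ)
    (hreg : C2Hk m k (ball a r) f)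
    (hc : ContinuousOn (fun q : Evec m × Evec m => f q.1 q.2)
      (closedBall a r ×ˢ closedBall (0 : Evec m) 1))
    (hD : ∀ x ∈ ball a r, ∀ u ∈ ball (0 : Evec m) 1, Dk m k f x u = 0) :
    ∀ ν : Evec m, ‖ν‖ < 1 →
      f a ν = (cmk m k / 2) * ∫ ζ, f (a + r • ζ) (reflv ζ ν) ∂(sphereM m) := fun ν hν =>
  stmt_13_general m k (by omega) (by omega) a r hr f hreg hc hD ν hν.le
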